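/- (Theorem 2.11) Let p ∈ C³((0,∞)) satisfy: p'(τ) < 0 and p''(τ) > 0 for all τ > 0; lim_{τ→0⁺} p(τ) = +∞, lim_{τ→∞} p(τ) = 0, ∫_1^∞ √(−p'(τ)) dτ < ∞; ∫_0^1 √(−p'(τ)) dτ = ∞; and suppose there exists A > 0 such that (5+A) p''(τ)² − 4 p'(τ) p'''(τ) ≥ 0 for all τ > 0. Let the initial data (τ₀,u₀) satisfy Assumption A. Then the Cauchy problem for the p-system with pressure p admits a global-in-time C¹ solution if and only if s_x(x,0) ≥ 0 and r_x(x,0) ≥ 0 for all x ∈ ℝ. -/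

import Mathlib

open Real Set MeasureTheory Filter

/-- A `Cᵏ` solution `(τ, u)` of the p-system with general pressure `p` on `ℝ × I`. -/
def GenPSysSol (p : ℝ → ℝ) (I : Set ℝ) (k : ℕ) (τ u : ℝ → ℝ → ℝ) : Prop :=
  (∀ x t, t ∈ I → 0 < τ x t) ∧
  ContDiffOn ℝ k (fun q : ℝ × ℝ => τ q.1 q.2) (Set.univ ×ˢ I) ∧
  ContDiffOn ℝ k (fun q : ℝ × ℝ => u q.1 q.2) (Set.univ ×ˢ I) ∧
  (∀ x : ℝ, ∀ t ∈ I, deriv (fun t' => τ x t') t - deriv (fun x' => u x' t) x = 0) ∧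
  (∀ x : ℝ, ∀ t ∈ I, deriv (fun t' => u x t') t + deriv (fun x' => p (τ x' t)) x = 0)

/-- Assumption A: `τ₀, u₀` are `C¹` with `‖τ₀‖_{C¹} + ‖u₀‖_{C¹} ≤ M₁` and `τ₀ ≥ M₂ > 0`. -/
def AssumptionA (M₁ M₂ : ℝ) (τ₀ u₀ : ℝ → ℝ) : Prop :=
  ContDiff ℝ 1 τ₀ ∧ ContDiff ℝ 1 u₀ ∧ 0 < M₁ ∧ 0 < M₂ ∧
  (∀ x, |τ₀ x| + |deriv τ₀ x| + |u₀ x| + |deriv u₀ x| ≤ M₁) ∧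
  (∀ x, M₂ ≤ τ₀ x)

/-!
The Riemann invariants `s`, `r` are constant along their characteristics. If the solution is
global, `s - r` stays bounded above, so `∫_0^1 c = ∞` keeps `τ` away from `0`; the slopes `s_x`,
`r_x` stay bounded above, so by `τ_t = u_x` the volume `τ` grows at most linearly in time. Along a
characteristic, `√c(τ)` times the slope solves a Riccati equation whose coefficient, by the
condition on the third derivative of `p`, is at least a multiple of `1 / (1 + τ)`. As
`1 / (1 + t)` is not integrable, a negative slope would blow up.

Conversely, take as coordinates the feet `(x, y)`, `x ≤ y`, of the two characteristics through a
point `(X, T)` of space-time. The hodograph system for `(X, T)` is linear; it reduces to a Goursat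
problem with data on the diagonal, whose Neumann series has nonnegative terms for nondecreasing
`s` and `r`. This bounds `T_y` and `-T_x` below, which makes `(X, T)` injective and keeps `τ`
bounded on bounded time intervals, so that `(X, T)` is onto the half-plane `T ≥ 0`. Its inverse
transports `s` and `r`.
-/

section Pressure

/-- A `C²` pressure law for which the p-system is strictly hyperbolic (`p' < 0`) and genuinely
nonlinear (`p'' > 0`). -/
structure IsConvexPressure (p : ℝ → ℝ) : Prop where
  contDiffOn : ContDiffOn ℝ 2 p (Ioi 0)
  deriv_neg : ∀ v ∈ Ioi (0 : ℝ), deriv p v < 0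
  deriv_deriv_pos : ∀ v ∈ Ioi (0 : ℝ), 0 < deriv (deriv p) v

/-- The sound speed `c = √(-p')` in Lagrangian coordinates. -/
noncomputable def soundSpeed (p : ℝ → ℝ) (v : ℝ) : ℝ := √(-deriv p v)

/-- The potential `φ(v) = ∫_v^1 c` of the sound speed, for which the Riemann invariants are
`s = u + φ(τ)` and `r = u - φ(τ)`. -/
noncomputable def soundPotential (p : ℝ → ℝ) (v : ℝ) : ℝ := ∫ ξ in v..1, √(-deriv p ξ)

namespace IsConvexPressure

variable {p : ℝ → ℝ} (hP : IsConvexPressure p) {v w : ℝ}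
include hP

lemma contDiffOn_deriv : ContDiffOn ℝ 1 (deriv p) (Ioi 0) :=
  ((contDiffOn_succ_iff_deriv_of_isOpen (n := 1) isOpen_Ioi).1 hP.contDiffOn).2.2

lemma hasDerivAt (hv : 0 < v) : HasDerivAt p (deriv p v) v :=
  ((hP.contDiffOn.differentiableOn two_ne_zero).differentiableAt (Ioi_mem_nhds hv)).hasDerivAt

lemma hasDerivAt_deriv (hv : 0 < v) : HasDerivAt (deriv p) (deriv (deriv p) v) v :=
  ((hP.contDiffOn_deriv.differentiableOn one_ne_zero).differentiableAt
    (Ioi_mem_nhds hv)).hasDerivAt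

lemma soundSpeed_pos (hv : 0 < v) : 0 < soundSpeed p v :=
  Real.sqrt_pos.2 (neg_pos.2 (hP.deriv_neg v hv))

lemma sq_soundSpeed (hv : 0 < v) : soundSpeed p v ^ 2 = -deriv p v :=
  Real.sq_sqrt (neg_pos.2 (hP.deriv_neg v hv)).le

lemma hasDerivAt_soundSpeed (hv : 0 < v) :
    HasDerivAt (soundSpeed p) (-deriv (deriv p) v / (2 * soundSpeed p v)) v :=
  (hP.hasDerivAt_deriv hv).neg.sqrt (neg_pos.2 (hP.deriv_neg v hv)).ne'

lemma deriv_soundSpeed_neg (hv : 0 < v) : deriv (soundSpeed p) v < 0 := by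
  rw [(hP.hasDerivAt_soundSpeed hv).deriv]
  exact div_neg_of_neg_of_pos (neg_neg_of_pos (hP.deriv_deriv_pos v hv))
    (mul_pos two_pos (hP.soundSpeed_pos hv))

lemma hasDerivAt_soundSpeed' (hv : 0 < v) :
    HasDerivAt (soundSpeed p) (deriv (soundSpeed p) v) v :=
  (hP.hasDerivAt_soundSpeed hv).differentiableAt.hasDerivAt

lemma continuousOn_soundSpeed : ContinuousOn (soundSpeed p) (Ioi 0) := fun _ hv =>
  (hP.hasDerivAt_soundSpeed hv).continuousAt.continuousWithinAt

lemma continuousOn_deriv_soundSpeed : ContinuousOn (deriv (soundSpeed p)) (Ioi 0) := by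
  have h2 : ContinuousOn (deriv (deriv p)) (Ioi 0) :=
    hP.contDiffOn_deriv.continuousOn_deriv_of_isOpen isOpen_Ioi le_rfl
  refine (h2.neg.div (hP.continuousOn_soundSpeed.const_smul (2 : ℝ)) fun v hv =>
    (mul_pos two_pos (hP.soundSpeed_pos hv)).ne').congr fun v hv => ?_
  exact (hP.hasDerivAt_soundSpeed hv).deriv

lemma antitoneOn_soundSpeed : AntitoneOn (soundSpeed p) (Ioi 0) := by
  refine antitoneOn_of_deriv_nonpos (convex_Ioi 0) hP.continuousOn_soundSpeed ?_ ?_ <;>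
    rw [interior_Ioi]
  · exact fun v hv => (hP.hasDerivAt_soundSpeed hv).differentiableAt.differentiableWithinAt
  · exact fun v hv => (hP.deriv_soundSpeed_neg hv).le

lemma intervalIntegrable_soundSpeed (hv : 0 < v) (hw : 0 < w) :
    IntervalIntegrable (soundSpeed p) volume v w :=
  (hP.continuousOn_soundSpeed.mono fun _ hx => (lt_min hv hw).trans_le hx.1).intervalIntegrable

lemma hasDerivAt_soundPotential (hv : 0 < v) :
    HasDerivAt (soundPotential p) (-soundSpeed p v) v :=
  intervalIntegral.integral_hasDerivAt_left (hP.intervalIntegrable_soundSpeed hv one_pos)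
    (hP.continuousOn_soundSpeed.stronglyMeasurableAtFilter isOpen_Ioi v hv)
    (hP.continuousOn_soundSpeed.continuousAt (Ioi_mem_nhds hv))

lemma continuousOn_soundPotential : ContinuousOn (soundPotential p) (Ioi 0) := fun _ hv =>
  (hP.hasDerivAt_soundPotential hv).continuousAt.continuousWithinAt

lemma strictAntiOn_soundPotential : StrictAntiOn (soundPotential p) (Ioi 0) := by
  refine strictAntiOn_of_deriv_neg (convex_Ioi 0) hP.continuousOn_soundPotential ?_
  rw [interior_Ioi]
  intro v hv
  rw [(hP.hasDerivAt_soundPotential hv).deriv]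
  exact neg_neg_of_pos (hP.soundSpeed_pos hv)

lemma exists_lt_soundPotential (hint : ¬ IntegrableOn (soundSpeed p) (Ioo 0 1)) (Z : ℝ) :
    ∃ v, 0 < v ∧ Z < soundPotential p v := by
  by_contra! hcon
  have hpos (n : ℕ) : (0 : ℝ) < 1 / ((n : ℝ) + 1) := by positivity
  have hle (n : ℕ) : 1 / ((n : ℝ) + 1) ≤ 1 := by
    rw [div_le_one (by positivity)]
    linarith [Nat.cast_nonneg (α := ℝ) n]
  refine hint (IntegrableOn.mono_set ?_ Ioo_subset_Ioc_self)
  refine integrableOn_Ioc_of_intervalIntegral_norm_bounded (I := Z) (l := atTop)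
    (a := fun n : ℕ => 1 / ((n : ℝ) + 1)) (b := fun _ => 1) (fun n => ?_)
    tendsto_one_div_add_atTop_nhds_zero_nat tendsto_const_nhds (Eventually.of_forall fun n => ?_)
  · exact (intervalIntegrable_iff_integrableOn_Ioc_of_le (hle n)).1
      (hP.intervalIntegrable_soundSpeed (hpos n) one_pos)
  · have hbound := hcon _ (hpos n)
    rw [soundPotential, intervalIntegral.integral_of_le (hle n)] at hbound
    simpa only [soundSpeed, Real.norm_of_nonneg (Real.sqrt_nonneg _)] using hbound

end IsConvexPressure

/-- If a power `b^(1+A)` with `A > 0` is convex, then `b'` cannot decay faster than `1/v`: as long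
as `b` is bounded, `b'` is bounded below, and once `b` has doubled, the tangent line of `b^(1+A)`
bounds `b'`. -/
lemma exists_div_one_add_le_of_convexOn_rpow {b b' : ℝ → ℝ} {A m : ℝ} (hA : 0 < A) (hm : 0 < m)
    (hb : ∀ v ∈ Ioi (0 : ℝ), 0 < b v) (hb' : ∀ v ∈ Ioi (0 : ℝ), 0 < b' v)
    (hd : ∀ v ∈ Ioi (0 : ℝ), HasDerivAt b (b' v) v)
    (hconv : ConvexOn ℝ (Ioi 0) fun v => b v ^ (1 + A)) :
    ∃ ε > 0, ∀ v, m ≤ v → ε / (1 + v) ≤ b' v := by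
  have hdw : ∀ v ∈ Ioi (0 : ℝ),
      HasDerivAt (fun v => b v ^ (1 + A)) ((1 + A) * (b v ^ A * b' v)) v := fun v hv => by
    refine ((hd v hv).rpow_const (p := 1 + A) (Or.inl (hb v hv).ne')).congr_deriv ?_
    rw [add_sub_cancel_left]
    ring
  have hbm := hb m hm
  have hb'm := hb' m hm
  refine ⟨min (b m ^ A * b' m / (2 * b m) ^ A) (b m / (1 + A)), by positivity, fun v hmv => ?_⟩
  have hv : 0 < v := hm.trans_le hmv
  have hbv := hb v hv
  have hbvA : 0 < b v ^ A := rpow_pos_of_pos hbv A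
  have hb'v := hb' v hv
  rw [div_le_iff₀ (by linarith)]
  rcases le_or_gt (b v) (2 * b m) with hsmall | hlarge
  · have hslope : b m ^ A * b' m ≤ b v ^ A * b' v := by
      have := hconv.monotoneOn_deriv (fun x hx => (hdw x hx).differentiableAt) hm hv hmv
      rw [(hdw m hm).deriv, (hdw v hv).deriv] at this
      exact le_of_mul_le_mul_left this (by linarith)
    have hb'v_ge : b m ^ A * b' m / (2 * b m) ^ A ≤ b' v := by
      rw [div_le_iff₀ (by positivity), mul_comm (b' v)]
      exact hslope.trans (by gcongr)
    exact (min_le_left _ _).trans (hb'v_ge.trans (le_mul_of_one_le_right hb'v.le (by linarith)))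
  · have htangent : b v ^ (1 + A) - b m ^ (1 + A) ≤ (1 + A) * (b v ^ A * b' v) * (v - m) := by
      rcases hmv.eq_or_lt with rfl | hlt
      · simp
      · have := hconv.slope_le_of_hasDerivAt hm hv hlt (hdw v hv)
        rwa [slope_def_field, div_le_iff₀ (sub_pos.2 hlt)] at this
    rw [rpow_one_add' hbv.le (by linarith), rpow_one_add' hbm.le (by linarith)] at htangent
    have hpow : b m ^ A ≤ b v ^ A := rpow_le_rpow hbm.le (by linarith) hA.le
    have hcancel : b v ^ A * b m ≤ b v ^ A * ((1 + A) * b' v * (v - m)) := by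
      nlinarith [mul_le_mul_of_nonneg_left hpow hbm.le, mul_lt_mul_of_pos_right hlarge hbvA]
    have hbm_le := le_of_mul_le_mul_left hcancel hbvA
    refine (min_le_right _ _).trans ?_
    rw [div_le_iff₀ (by linarith)]
    nlinarith [mul_pos (by linarith : 0 < 1 + A) hb'v]

/-- `4 q q'' ≤ (5 + A) q'²`, with `q = -p'`, says exactly that `q ^ (-(1 + A) / 4)` is convex. -/
lemma convexOn_rpow_of_sq_le {q q' q'' : ℝ → ℝ} {A : ℝ} (hA : 0 < A)
    (hq : ∀ v ∈ Ioi (0 : ℝ), 0 < q v) (hdq : ∀ v ∈ Ioi (0 : ℝ), HasDerivAt q (q' v) v)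
    (hdq' : ∀ v ∈ Ioi (0 : ℝ), HasDerivAt q' (q'' v) v)
    (hcond : ∀ v ∈ Ioi (0 : ℝ), 4 * q v * q'' v ≤ (5 + A) * q' v ^ 2) :
    ConvexOn ℝ (Ioi 0) fun v => q v ^ (-(1 + A) / 4) := by
  have hdw : ∀ v ∈ Ioi (0 : ℝ), HasDerivAt (fun v => q v ^ (-(1 + A) / 4))
      (q' v * (-(1 + A) / 4) * q v ^ (-(5 + A) / 4)) v := fun v hv => by
    refine ((hdq v hv).rpow_const (p := -(1 + A) / 4) (Or.inl (hq v hv).ne')).congr_deriv ?_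
    ring_nf
  have hddw : ∀ v ∈ Ioi (0 : ℝ), HasDerivAt (fun v => q' v * (-(1 + A) / 4) * q v ^ (-(5 + A) / 4))
      ((1 + A) / 16 * q v ^ (-(5 + A) / 4 - 1) * ((5 + A) * q' v ^ 2 - 4 * q v * q'' v)) v :=
    fun v hv => by
    have hq0 := (hq v hv).ne'
    refine (((hdq' v hv).mul_const (-(1 + A) / 4)).mul
      ((hdq v hv).rpow_const (p := -(5 + A) / 4) (Or.inl hq0))).congr_deriv ?_
    rw [rpow_sub_one hq0]
    field
  refine convexOn_of_hasDerivWithinAt2_nonneg (convex_Ioi 0)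
    (fun v hv => (hdw v hv).continuousAt.continuousWithinAt) (f' := fun v => _)
    (f'' := fun v => _) (fun v hv => (hdw v (interior_subset hv)).hasDerivWithinAt)
    (fun v hv => (hddw v (interior_subset hv)).hasDerivWithinAt) fun v hv => ?_
  have := hq v (interior_subset hv)
  exact mul_nonneg (by positivity) (sub_nonneg.2 (hcond v (interior_subset hv)))

lemma IsConvexPressure.exists_div_one_add_le {p : ℝ → ℝ} {A m : ℝ} (hP : IsConvexPressure p)
    (hp''' : DifferentiableOn ℝ (deriv (deriv p)) (Ioi 0)) (hA : 0 < A)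
    (hcond : ∀ v ∈ Ioi (0 : ℝ),
      0 ≤ (5 + A) * deriv (deriv p) v ^ 2 - 4 * deriv p v * deriv (deriv (deriv p)) v)
    (hm : 0 < m) :
    ∃ ε > 0, ∀ v, m ≤ v →
      ε / (1 + v) ≤ -deriv (soundSpeed p) v / (2 * (soundSpeed p v * √(soundSpeed p v))) := by
  have hc : ∀ v ∈ Ioi (0 : ℝ), 0 < soundSpeed p v := fun v hv => hP.soundSpeed_pos hv
  refine exists_div_one_add_le_of_convexOn_rpow (b := fun v => (√(soundSpeed p v))⁻¹) hA hm
    (fun v hv => inv_pos.2 (Real.sqrt_pos.2 (hc v hv)))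
    (fun v hv => div_pos (neg_pos.2 (hP.deriv_soundSpeed_neg hv))
      (mul_pos two_pos (mul_pos (hc v hv) (Real.sqrt_pos.2 (hc v hv))))) (fun v hv => ?_) ?_
  · refine (((hP.hasDerivAt_soundSpeed' hv).sqrt (hc v hv).ne').inv
      (Real.sqrt_pos.2 (hc v hv)).ne').congr_deriv ?_
    rw [Real.sq_sqrt (hc v hv).le]
    field
  · have hconv := convexOn_rpow_of_sq_le (q := fun v => -deriv p v) hA
      (fun v hv => neg_pos.2 (hP.deriv_neg v hv)) (fun v hv => (hP.hasDerivAt_deriv hv).neg)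
      (fun v hv => (hp'''.differentiableAt (Ioi_mem_nhds hv)).hasDerivAt.neg)
      fun v hv => by linarith [hcond v hv]
    refine hconv.congr fun v hv => ?_
    have hq := (neg_pos.2 (hP.deriv_neg v hv)).le
    simp only [soundSpeed, Real.sqrt_eq_rpow, ← Real.rpow_neg_one, ← Real.rpow_mul hq]
    ring_nf

end Pressure

section PlaneCalculus

variable {F : ℝ × ℝ → ℝ} {L : ℝ × ℝ →L[ℝ] ℝ} {x t : ℝ}

lemma clm_eq_smul_fst_add_smul_snd (L : ℝ × ℝ →L[ℝ] ℝ) :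
    L = L (1, 0) • ContinuousLinearMap.fst ℝ ℝ ℝ + L (0, 1) • ContinuousLinearMap.snd ℝ ℝ ℝ := by
  ext <;> simp

lemma hasDerivAt_fst_of_hasFDerivAt (hF : HasFDerivAt F L (x, t)) :
    HasDerivAt (fun y : ℝ => F (y, t)) (L (1, 0)) x :=
  hF.comp_hasDerivAt x ((hasDerivAt_id x).prodMk (hasDerivAt_const _ _))

lemma hasDerivAt_snd_of_hasFDerivAt (hF : HasFDerivAt F L (x, t)) :
    HasDerivAt (fun y : ℝ => F (x, y)) (L (0, 1)) t :=
  hF.comp_hasDerivAt t ((hasDerivAt_const _ _).prodMk (hasDerivAt_id t))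

lemma hasDerivAt_backward_of_hasFDerivAt (hF : HasFDerivAt F L (x, t)) (k : ℝ) :
    HasDerivAt (fun h : ℝ => F (x + k * h, t - h)) (L (k, -1)) 0 := by
  have hpath : HasDerivAt (fun h : ℝ => (x + k * h, t - h)) (k, -1) 0 := by
    apply HasDerivAt.prodMk
    · simpa using ((hasDerivAt_id (0 : ℝ)).const_mul k).const_add x
    · simpa using (hasDerivAt_id (0 : ℝ)).const_sub t
  have hF' : HasFDerivAt F L ((fun h : ℝ => (x + k * h, t - h)) 0) := by simpa using hF
  exact hF'.comp_hasDerivAt 0 hpath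

/-- The partial derivative `∂ₓF` of a function of `(x, t)`. -/
noncomputable def derivX (F : ℝ → ℝ → ℝ) (x t : ℝ) : ℝ := deriv (fun y => F y t) x

lemma hasFDerivAt_of_contDiffOn {F : ℝ → ℝ → ℝ}
    (hF : ContDiffOn ℝ 1 (fun q : ℝ × ℝ => F q.1 q.2) (univ ×ˢ Ici 0)) (ht : 0 < t) :
    HasFDerivAt (fun q : ℝ × ℝ => F q.1 q.2) (derivX F x t • ContinuousLinearMap.fst ℝ ℝ ℝ
      + deriv (F x) t • ContinuousLinearMap.snd ℝ ℝ ℝ) (x, t) := by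
  have hd := ((hF.contDiffAt (prod_mem_nhds (x := x) univ_mem (Ici_mem_nhds ht))).differentiableAt
    one_ne_zero).hasFDerivAt
  have hx : derivX F x t = _ := (hasDerivAt_fst_of_hasFDerivAt hd).deriv
  have ht' : deriv (F x) t = _ := (hasDerivAt_snd_of_hasFDerivAt hd).deriv
  rw [hx, ht', ← clm_eq_smul_fst_add_smul_snd]
  exact hd

lemma continuousOn_derivX_of_contDiffOn {F : ℝ → ℝ → ℝ}
    (hF : ContDiffOn ℝ 1 (fun q : ℝ × ℝ => F q.1 q.2) (univ ×ˢ Ici 0)) :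
    ContinuousOn (fun q : ℝ × ℝ => derivX F q.1 q.2) (univ ×ˢ Ioi 0) := by
  have hcont := ((hF.mono (prod_mono_right Ioi_subset_Ici_self)).continuousOn_fderiv_of_isOpen
    (isOpen_univ.prod isOpen_Ioi) le_rfl).clm_apply (continuousOn_const (c := ((1 : ℝ), (0 : ℝ))))
  refine hcont.congr fun q hq => ?_
  simp [(hasFDerivAt_of_contDiffOn (x := q.1) hF hq.2).fderiv]

end PlaneCalculus

section MaximumPrinciple

/-- A first time at which some `G i` fails to be negative would be a contradiction: by `hclos` all
`G j` are nonpositive there, and by `hback` the failure has already happened earlier. -/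
lemma forall_neg_of_no_first_zero {Y ι : Type*} [TopologicalSpace Y] [Finite ι]
    {Ω : Set Y} (hΩ : IsCompact Ω) {θ : Y → ℝ} (hθ : ContinuousOn θ Ω) {G : ι → Y → ℝ}
    (hG : ∀ i, ContinuousOn (G i) Ω)
    (hclos : ∀ q ∈ Ω, ∀ i, 0 ≤ G i q → q ∈ closure {q' ∈ Ω | θ q' < θ q})
    (hback : ∀ q ∈ Ω, ∀ i, 0 ≤ G i q → (∀ j, G j q ≤ 0) → ∃ q' ∈ Ω, θ q' < θ q ∧ 0 ≤ G i q') :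
    ∀ q ∈ Ω, ∀ i, G i q < 0 := by
  by_contra! hcon
  obtain ⟨q₀, hq₀, i₀, hi₀⟩ := hcon
  have hcompact : IsCompact (⋃ i, Ω ∩ G i ⁻¹' Ici 0) := isCompact_iUnion fun i => by
    obtain ⟨V, hV, hVeq⟩ := continuousOn_iff_isClosed.1 (hG i) (Ici 0) isClosed_Ici
    rw [inter_comm, hVeq]
    exact hΩ.inter_left hV
  obtain ⟨q, hq, hmin⟩ := hcompact.exists_isMinOn ⟨q₀, mem_iUnion.2 ⟨i₀, hq₀, hi₀⟩⟩
    (hθ.mono (iUnion_subset fun i => inter_subset_left))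
  obtain ⟨i, hqΩ, hi⟩ := mem_iUnion.1 hq
  have hbefore : ∀ q' ∈ Ω, θ q' < θ q → ∀ j, G j q' < 0 := fun q' hq' hlt j => by
    by_contra! hj
    exact (hmin (mem_iUnion.2 ⟨j, hq', hj⟩)).not_gt hlt
  have hnonpos : ∀ j, G j q ≤ 0 := fun j => by
    have hsub : G j '' {q' ∈ Ω | θ q' < θ q} ⊆ Iic 0 := by
      rintro _ ⟨q', hq', rfl⟩
      exact (hbefore q' hq'.1 hq'.2 j).le
    exact closure_minimal hsub isClosed_Iic
      (((hG j q hqΩ).mono (sep_subset _ _)).mem_closure_image (hclos q hqΩ i hi))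
  obtain ⟨q', hq'Ω, hlt, hpos⟩ := hback q hqΩ i hi hnonpos
  exact (hbefore q' hq'Ω hlt i).not_ge hpos

/-- The pairs `x ≤ y` of points at time `t` that are reached from `[a, b]` at time `T` by moving
backward in time with speed at most `K`. -/
def backwardCone (K a b T : ℝ) : Set (ℝ × ℝ × ℝ) :=
  {q | 0 ≤ q.2.2 ∧ q.2.2 ≤ T ∧ a - K * (T - q.2.2) ≤ q.1 ∧ q.1 ≤ q.2.1 ∧
    q.2.1 ≤ b + K * (T - q.2.2)}

lemma isCompact_backwardCone {K a b T : ℝ} (hK : 0 ≤ K) : IsCompact (backwardCone K a b T) := by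
  refine (isCompact_Icc.prod (isCompact_Icc.prod isCompact_Icc) : IsCompact (Icc (a - K * T)
    (b + K * T) ×ˢ Icc (a - K * T) (b + K * T) ×ˢ Icc 0 T)).of_isClosed_subset ?_ ?_
  · refine (isClosed_le ?_ ?_).and ((isClosed_le ?_ ?_).and ((isClosed_le ?_ ?_).and
      ((isClosed_le ?_ ?_).and (isClosed_le ?_ ?_)))) <;> fun_prop
  · rintro ⟨x, y, t⟩ ⟨h1, h2, h3, h4, h5⟩
    dsimp only at h1 h2 h3 h4 h5
    have := mul_le_mul_of_nonneg_left (by linarith : T - t ≤ T) hK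
    refine ⟨⟨?_, ?_⟩, ⟨?_, ?_⟩, h1, h2⟩ <;> dsimp only <;> linarith

lemma eventually_backward_mem_backwardCone {K a b T x y t k l : ℝ}
    (hq : (x, y, t) ∈ backwardCone K a b T) (ht : 0 < t) (hk : |k| ≤ K) (hl : |l| ≤ K)
    (hkl : x < y ∨ k = l) :
    ∀ᶠ h in nhdsWithin 0 (Ioi 0), (x + k * h, y + l * h, t - h) ∈ backwardCone K a b T := by
  obtain ⟨-, h2, h3, h4, h5⟩ := hq
  dsimp only at h2 h3 h4 h5
  have hordered : ∀ᶠ h in nhdsWithin 0 (Ioi 0), x + k * h ≤ y + l * h := by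
    rcases hkl with hxy | rfl
    · have hcont : Continuous fun h => y + l * h - (x + k * h) := by fun_prop
      have := (hcont.tendsto 0).eventually (lt_mem_nhds (a := 0) (by simpa using hxy))
      filter_upwards [this.filter_mono nhdsWithin_le_nhds] with h hh
      linarith
    · exact Eventually.of_forall fun h => by linarith
  filter_upwards [hordered, Ioo_mem_nhdsGT ht] with h hxy hh
  have hkh := mul_le_mul_of_nonneg_right (abs_le.1 hk).1 hh.1.le
  have hlh := mul_le_mul_of_nonneg_right (abs_le.1 hl).2 hh.1.le
  refine ⟨?_, ?_, ?_, hxy, ?_⟩ <;> dsimp only <;> linarith [hh.1, hh.2]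

lemma eventually_pos_of_hasDerivAt_pos {f : ℝ → ℝ} {d : ℝ} (hf : HasDerivAt f d 0) (hd : 0 < d)
    (h0 : 0 ≤ f 0) : ∀ᶠ h in nhdsWithin 0 (Ioi 0), 0 < f h := by
  have hslope := hf.hasDerivWithinAt (s := Ioi 0)
  rw [hasDerivWithinAt_iff_tendsto_slope' self_notMem_Ioi] at hslope
  filter_upwards [hslope.eventually (lt_mem_nhds hd), self_mem_nhdsWithin] with h hh hpos
  rw [slope_def_field, sub_zero] at hh
  linarith [(div_pos_iff_of_pos_right hpos).1 hh]

/-- Negativity of all `G i` propagates from `t = 0` if wherever `G i` is nonnegative it increases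
backward in time along some pair of paths of speed at most `K`. -/
lemma forall_neg_backwardCone {ι : Type*} [Finite ι] {G : ι → ℝ × ℝ × ℝ → ℝ} {K a b T : ℝ}
    (hK : 0 ≤ K) (hG : ∀ i, ContinuousOn (G i) {q | 0 ≤ q.2.2})
    (hinit : ∀ x y, x ≤ y → ∀ i, G i (x, y, 0) < 0)
    (hback : ∀ x y t, x ≤ y → 0 < t → t ≤ T → ∀ i, 0 ≤ G i (x, y, t) →
      (∀ j, G j (x, y, t) ≤ 0) → ∃ k l d, |k| ≤ K ∧ |l| ≤ K ∧ (x < y ∨ k = l) ∧ 0 < d ∧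
        HasDerivAt (fun h => G i (x + k * h, y + l * h, t - h)) d 0)
    (hab : a ≤ b) (hT : 0 ≤ T) (i : ι) : G i (a, b, T) < 0 := by
  have time_pos : ∀ q ∈ backwardCone K a b T, ∀ i, 0 ≤ G i q → 0 < q.2.2 := by
    rintro ⟨x, y, t⟩ ⟨h1, -, -, hxy, -⟩ i hi
    refine lt_of_le_of_ne h1 ?_
    rintro rfl
    exact (hinit x y hxy i).not_ge hi
  refine forall_neg_of_no_first_zero (Ω := backwardCone K a b T) (isCompact_backwardCone hK)
    (θ := fun q => q.2.2)
    (by fun_prop) (fun i => (hG i).mono fun q hq => hq.1) ?_ ?_ (a, b, T)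
    ⟨hT, le_rfl, by simp, hab, by simp⟩ i
  · rintro ⟨x, y, t⟩ hq i hi
    have hcont : Continuous fun h : ℝ => (x + 0 * h, y + 0 * h, t - h) := by fun_prop
    refine mem_closure_of_tendsto (f := fun h : ℝ => (x + 0 * h, y + 0 * h, t - h))
      (b := nhdsWithin 0 (Ioi 0)) ?_ ?_
    · simpa using (hcont.tendsto 0).mono_left nhdsWithin_le_nhds
    · filter_upwards [eventually_backward_mem_backwardCone (k := 0) (l := 0) hq
        (time_pos _ hq i hi) (by simpa using hK) (by simpa using hK) (Or.inr rfl),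
        self_mem_nhdsWithin] with h hh hpos
      exact ⟨hh, sub_lt_self t hpos⟩
  · rintro ⟨x, y, t⟩ hq i hi hnonpos
    have ht := time_pos _ hq i hi
    obtain ⟨k, l, d, hk, hl, hkl, hd, hderiv⟩ := hback x y t hq.2.2.2.1 ht hq.2.1 i hi hnonpos
    obtain ⟨h, hmem, hpos, hGpos⟩ := ((eventually_backward_mem_backwardCone hq ht hk hl hkl).and
      (Filter.Eventually.and self_mem_nhdsWithin
        (eventually_pos_of_hasDerivAt_pos hderiv hd (by simpa using hi)))).exists
    exact ⟨_, hmem, sub_lt_self t hpos, hGpos.le⟩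

end MaximumPrinciple

section APrioriBounds

/-- The Riemann invariant `z_σ = u + σ φ(τ)` for `σ = ±1`, so that `s = z₁` and `r = z₋₁`. Along a
solution `∂ₜz_σ + σ c(τ) ∂ₓz_σ = 0`. -/
noncomputable def riemannInv (p : ℝ → ℝ) (τ u : ℝ → ℝ → ℝ) (σ : ℤˣ) (x t : ℝ) : ℝ :=
  u x t + (σ : ℤ) * soundPotential p (τ x t)

namespace GenPSysSol

variable {p : ℝ → ℝ} {τ u : ℝ → ℝ → ℝ} (hP : IsConvexPressure p)
  (hsol : GenPSysSol p (Ici 0) 1 τ u) {x t : ℝ} {σ : ℤˣ} {v₀ B : ℝ}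
include hsol

lemma hasFDerivAt_specificVolume (ht : 0 < t) :
    HasFDerivAt (fun q : ℝ × ℝ => τ q.1 q.2) (derivX τ x t • ContinuousLinearMap.fst ℝ ℝ ℝ
      + derivX u x t • ContinuousLinearMap.snd ℝ ℝ ℝ) (x, t) := by
  have hτ_t : deriv (τ x) t = derivX u x t := sub_eq_zero.1 (hsol.2.2.2.1 x t ht.le)
  rw [← hτ_t]
  exact hasFDerivAt_of_contDiffOn hsol.2.1 ht

include hP

lemma hasFDerivAt_velocity (ht : 0 < t) :
    HasFDerivAt (fun q : ℝ × ℝ => u q.1 q.2) (derivX u x t • ContinuousLinearMap.fst ℝ ℝ ℝ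
      + (soundSpeed p (τ x t) ^ 2 * derivX τ x t) • ContinuousLinearMap.snd ℝ ℝ ℝ) (x, t) := by
  have hτ := hasDerivAt_fst_of_hasFDerivAt (hsol.hasFDerivAt_specificVolume (x := x) ht)
  have hp_x := ((hP.hasDerivAt (hsol.1 x t ht.le)).comp x hτ).deriv
  have hu_t : deriv (u x) t + deriv (p ∘ fun y => τ y t) x = 0 := hsol.2.2.2.2 x t ht.le
  rw [hp_x] at hu_t
  convert hasFDerivAt_of_contDiffOn hsol.2.2.1 ht using 3
  simp only [hP.sq_soundSpeed (hsol.1 x t ht.le)]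
  simp at hu_t
  linarith

lemma hasFDerivAt_riemannInv (ht : 0 < t) :
    HasFDerivAt (fun q : ℝ × ℝ => riemannInv p τ u σ q.1 q.2)
      ((derivX u x t - (σ : ℤ) * soundSpeed p (τ x t) * derivX τ x t) •
          ContinuousLinearMap.fst ℝ ℝ ℝ
        + (-((σ : ℤ) * soundSpeed p (τ x t)) *
          (derivX u x t - (σ : ℤ) * soundSpeed p (τ x t) * derivX τ x t)) •
          ContinuousLinearMap.snd ℝ ℝ ℝ) (x, t) := by
  refine ((hsol.hasFDerivAt_velocity hP ht).add
    (((hP.hasDerivAt_soundPotential (hsol.1 x t ht.le)).comp_hasFDerivAt (x, t)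
      (hsol.hasFDerivAt_specificVolume ht)).const_mul ((σ : ℤ) : ℝ))).congr_fderiv ?_
  rcases Int.units_eq_one_or σ with rfl | rfl <;> ext <;> simp <;> ring

lemma derivX_riemannInv (ht : 0 < t) : derivX (riemannInv p τ u σ) x t =
    derivX u x t - (σ : ℤ) * soundSpeed p (τ x t) * derivX τ x t :=
  (hasDerivAt_fst_of_hasFDerivAt (hsol.hasFDerivAt_riemannInv hP ht)).deriv.trans (by simp)

lemma continuousOn_soundPotential_comp :
    ContinuousOn (fun q : ℝ × ℝ => soundPotential p (τ q.1 q.2)) (univ ×ˢ Ici 0) :=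
  hP.continuousOn_soundPotential.comp hsol.2.1.continuousOn fun q hq => hsol.1 q.1 q.2 hq.2

lemma continuousOn_riemannInv (σ : ℤˣ) :
    ContinuousOn (fun q : ℝ × ℝ => riemannInv p τ u σ q.1 q.2) (univ ×ˢ Ici 0) :=
  hsol.2.2.1.continuousOn.add (continuousOn_const.mul (hsol.continuousOn_soundPotential_comp hP))

lemma hasDerivAt_riemannInv_backward (ht : 0 < t) :
    HasDerivAt (fun h => riemannInv p τ u σ (x + -((σ : ℤ) * soundSpeed p (τ x t)) * h) (t - h))
      0 0 := by
  refine (hasDerivAt_backward_of_hasFDerivAt (hsol.hasFDerivAt_riemannInv hP ht) _).congr_deriv ?_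
  simp
  ring

omit hsol in
lemma abs_units_mul_soundSpeed_le {v : ℝ} (hv₀ : 0 < v₀) (hv : v₀ ≤ v) (σ : ℤˣ) :
    |-((σ : ℤ) * soundSpeed p v)| ≤ soundSpeed p v₀ := by
  have hle := hP.antitoneOn_soundSpeed hv₀ (hv₀.trans_le hv) hv
  have hpos := hP.soundSpeed_pos (hv₀.trans_le hv)
  rcases Int.units_eq_one_or σ with rfl | rfl <;> simpa [abs_of_pos hpos] using hle

lemma units_mul_soundSpeed_le {y : ℝ} (ht : 0 ≤ t)
    (h : (σ : ℤ) * soundPotential p (τ x t) ≤ (σ : ℤ) * soundPotential p (τ y t)) :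
    (σ : ℤ) * soundSpeed p (τ x t) ≤ (σ : ℤ) * soundSpeed p (τ y t) := by
  have hx := hsol.1 x t ht
  have hy := hsol.1 y t ht
  rcases Int.units_eq_one_or σ with rfl | rfl
  · have := (hP.strictAntiOn_soundPotential.le_iff_ge hx hy).1 (by simpa using h)
    simpa using hP.antitoneOn_soundSpeed hy hx this
  · have := (hP.strictAntiOn_soundPotential.le_iff_ge hy hx).1 (by simpa using h)
    simpa using hP.antitoneOn_soundSpeed hx hy this

/-- The bounds on `σ z_σ` keep `τ` above `v₀`, because `φ(τ) = (z₁ - z₋₁) / 2`, and this bounds the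
characteristic speeds by `c(v₀)`, so that the bounds on `σ z_σ` propagate along characteristics. -/
theorem le_specificVolume {W : ℝ} (hv₀ : 0 < v₀) (hW : W < soundPotential p v₀)
    (hinit : ∀ (σ : ℤˣ) x, (σ : ℤ) * riemannInv p τ u σ x 0 ≤ W) (x₁ : ℝ) {t₁ : ℝ} (ht₁ : 0 ≤ t₁) :
    v₀ ≤ τ x₁ t₁ := by
  set ε := (soundPotential p v₀ - W) / (1 + t₁)
  have hε_pos : 0 < ε := div_pos (sub_pos.2 hW) (by linarith)
  have hε_mul : ε * (1 + t₁) = soundPotential p v₀ - W := div_mul_cancel₀ _ (by positivity)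
  set G : ℤˣ → ℝ × ℝ × ℝ → ℝ := fun σ q =>
    (σ : ℤ) * riemannInv p τ u σ q.1 q.2.2 - W - ε * (1 + q.2.2) with hG
  have le_of_nonpos : ∀ x y t, 0 ≤ t → t ≤ t₁ → (∀ σ, G σ (x, y, t) ≤ 0) → v₀ ≤ τ x t := by
    intro x y t ht htt₁ hnonpos
    have h1 := hnonpos 1
    have h2 := hnonpos (-1)
    simp only [hG, riemannInv, Units.val_one, Units.val_neg, Int.cast_one, Int.cast_neg] at h1 h2
    refine (hP.strictAntiOn_soundPotential.le_iff_ge (hsol.1 x t ht) hv₀).1 ?_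
    linarith [mul_le_mul_of_nonneg_left (by linarith : 1 + t ≤ 1 + t₁) hε_pos.le]
  have hneg := forall_neg_backwardCone (G := G) (hP.soundSpeed_pos hv₀).le (fun σ => ?_)
    (fun x y _ σ => by simp only [hG]; linarith [hinit σ x]) ?_ (le_refl x₁) ht₁
  · exact le_of_nonpos x₁ x₁ t₁ ht₁ le_rfl fun σ => (hneg σ).le
  · exact ((continuousOn_const.mul ((hsol.continuousOn_riemannInv hP σ).comp
      (f := fun q : ℝ × ℝ × ℝ => (q.1, q.2.2)) (by fun_prop) fun q hq => ⟨trivial, hq⟩)).sub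
      continuousOn_const).sub (by fun_prop)
  · intro x y t _ ht htt₁ σ _ hnonpos
    have hspeed := abs_units_mul_soundSpeed_le hP hv₀ (le_of_nonpos x y t ht.le htt₁ hnonpos) σ
    refine ⟨_, _, ε, hspeed, hspeed, Or.inr rfl, hε_pos, ?_⟩
    refine ((((hsol.hasDerivAt_riemannInv_backward hP ht).const_mul ((σ : ℤ) : ℝ)).sub_const
      W).sub ((((hasDerivAt_id (0 : ℝ)).const_sub t).const_add 1).const_mul ε)).congr_deriv ?_
    ring

/-- Where the bound for `z_σ` is attained but not the one for `z_{-σ}`, the difference of `σ φ(τ)`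
is nonnegative, hence the `σ`-characteristics through `x` and `y` diverge backward in time. -/
theorem riemannInv_sub_le (hB : 0 ≤ B) (hv₀ : 0 < v₀) (hτ : ∀ x t, 0 ≤ t → v₀ ≤ τ x t)
    (hinit : ∀ σ x y, x ≤ y →
      riemannInv p τ u σ y 0 - riemannInv p τ u σ x 0 ≤ B * (y - x))
    {x₁ y₁ t₁ : ℝ} (hxy₁ : x₁ ≤ y₁) (ht₁ : 0 ≤ t₁) (σ : ℤˣ) :
    riemannInv p τ u σ y₁ t₁ - riemannInv p τ u σ x₁ t₁ ≤ B * (y₁ - x₁) := by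
  suffices hδ : ∀ δ > 0, riemannInv p τ u σ y₁ t₁ - riemannInv p τ u σ x₁ t₁
      ≤ B * (y₁ - x₁) + δ * (1 + t₁) by
    refine le_of_forall_pos_le_add fun e he => ?_
    have := hδ (e / (1 + t₁)) (by positivity)
    rwa [div_mul_cancel₀ _ (by positivity)] at this
  intro δ hδ
  have hK := (hP.soundSpeed_pos hv₀).le
  set G : ℤˣ → ℝ × ℝ × ℝ → ℝ := fun σ q => riemannInv p τ u σ q.2.1 q.2.2
    - riemannInv p τ u σ q.1 q.2.2 - (B * (q.2.1 - q.1) + δ * (1 + q.2.2)) with hG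
  have hneg := forall_neg_backwardCone (G := G) hK (fun σ => ?_)
    (fun x y hxy σ => by simp only [hG]; linarith [hinit σ x y hxy]) ?_ hxy₁ ht₁
  · linarith [hneg σ]
  · exact (((hsol.continuousOn_riemannInv hP σ).comp (f := fun q : ℝ × ℝ × ℝ => (q.2.1, q.2.2))
      (by fun_prop) fun q hq => ⟨trivial, hq⟩).sub ((hsol.continuousOn_riemannInv hP σ).comp
      (f := fun q : ℝ × ℝ × ℝ => (q.1, q.2.2)) (by fun_prop) fun q hq => ⟨trivial, hq⟩)).sub
      (by fun_prop)
  · intro x y t hxy ht _ σ hσ hnonpos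
    have hlt : x < y := hxy.lt_of_ne fun h => by
      subst h
      simp only [hG, sub_self, mul_zero, zero_add] at hσ
      linarith [mul_pos hδ (by linarith : 0 < 1 + t)]
    refine ⟨_, _, _, abs_units_mul_soundSpeed_le hP hv₀ (hτ x t ht.le) σ,
      abs_units_mul_soundSpeed_le hP hv₀ (hτ y t ht.le) σ, Or.inl hlt, ?_,
      ((hsol.hasDerivAt_riemannInv_backward hP ht).sub
        (hsol.hasDerivAt_riemannInv_backward hP ht)).sub
      (((((hasDerivAt_id (0 : ℝ)).const_mul _).const_add y).sub
        (((hasDerivAt_id (0 : ℝ)).const_mul _).const_add x)).const_mul B |>.add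
        ((((hasDerivAt_id (0 : ℝ)).const_sub t).const_add 1).const_mul δ))⟩
    have hother := hnonpos (-σ)
    have hspeed := hsol.units_mul_soundSpeed_le hP (σ := σ) (x := x) (y := y) ht.le (by
      simp only [hG, riemannInv, Units.val_neg, Int.cast_neg] at hσ hother
      linarith)
    nlinarith

end GenPSysSol

end APrioriBounds

section Transport

variable {F F' C C' : ℝ → ℝ → ℝ} {X J : ℝ → ℝ} {I : Set ℝ} {a b : ℝ}

lemma continuousOn_tube {G : ℝ → ℝ → ℝ} (hG : ContinuousOn (fun q : ℝ × ℝ => G q.1 q.2) (univ ×ˢ I))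
    (hX : ContinuousOn X I) :
    ContinuousOn (fun q : ℝ × ℝ => G (X q.1 + q.2) q.1) (I ×ˢ Icc (-1) 1) :=
  hG.comp (f := fun q : ℝ × ℝ => (X q.1 + q.2, q.1)) (((hX.comp continuousOn_fst fun _ hq =>
    hq.1).add continuousOn_snd).prodMk continuousOn_fst) fun _ hq => ⟨trivial, hq.1⟩

lemma exists_forall_abs_sub_sub_mul_le (hI : IsCompact I) (hX : ContinuousOn X I)
    (hC : ∀ x, ∀ t ∈ I, HasDerivAt (fun y => C y t) (C' x t) x)
    (hC' : ContinuousOn (fun q : ℝ × ℝ => C' q.1 q.2) (univ ×ˢ I)) {η : ℝ} (hη : 0 < η) :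
    ∃ δ > 0, ∀ t ∈ I, ∀ y, |y| ≤ δ →
      |C (X t + y) t - C (X t) t - y * C' (X t) t| ≤ η * |y| := by
  obtain ⟨δ, hδ, hunif⟩ := Metric.uniformContinuousOn_iff_le.1
    ((hI.prod isCompact_Icc).uniformContinuousOn_of_continuous (continuousOn_tube hC' hX)) η hη
  refine ⟨min 1 δ, by positivity, fun t ht y hy => ?_⟩
  have hderiv : ∀ w ∈ Icc (-|y|) |y|,
      HasDerivWithinAt (fun w => C (X t + w) t - w * C' (X t) t)
        (C' (X t + w) t - C' (X t) t) (Icc (-|y|) |y|) w := fun w _ => by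
    refine (((hC (X t + w) t ht).comp w ((hasDerivAt_id w).const_add (X t))).sub
      ((hasDerivAt_id w).mul_const (C' (X t) t))).hasDerivWithinAt.congr_deriv ?_
    ring
  have hbound : ∀ w ∈ Icc (-|y|) |y|, ‖C' (X t + w) t - C' (X t) t‖ ≤ η := fun w hw => by
    have hw := abs_le.2 hw
    simpa [Real.dist_eq] using hunif (t, w)
      ⟨ht, abs_le.1 (hw.trans (hy.trans (min_le_left _ _)))⟩ (t, 0) ⟨ht, by simp⟩
      (by simpa [Prod.dist_eq, hδ.le] using hw.trans (hy.trans (min_le_right _ _)))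
  have := (convex_Icc _ _).norm_image_sub_le_of_norm_hasDerivWithin_le hderiv hbound
    (x := 0) (y := y) (by simp) (abs_le.1 le_rfl)
  simpa [sub_right_comm] using this

lemma hasDerivWithinAt_comp_perturbed {h t : ℝ}
    (hF : HasFDerivAt (fun q : ℝ × ℝ => F q.1 q.2) (F' (X t + h * J t) t •
      ContinuousLinearMap.fst ℝ ℝ ℝ + (-C (X t + h * J t) t * F' (X t + h * J t) t) •
      ContinuousLinearMap.snd ℝ ℝ ℝ) (X t + h * J t, t))
    (hX : HasDerivWithinAt X (C (X t) t) I t) (hJ : HasDerivWithinAt J (C' (X t) t * J t) I t) :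
    HasDerivWithinAt (fun t => F (X t + h * J t) t) (F' (X t + h * J t) t *
      -(C (X t + h * J t) t - C (X t) t - h * J t * C' (X t) t)) I t := by
  refine (hF.comp_hasDerivWithinAt (f := fun t => (X t + h * J t, t)) t
    ((hX.add (hJ.const_mul h)).prodMk (hasDerivWithinAt_id _ _))).congr_deriv ?_
  simp
  ring

/-- Up to `o(h)`, the curve `X + hJ` is again a characteristic, so `F` is constant along it. -/
lemma isLittleO_perturbed_sub (hab : a ≤ b)
    (hF : ∀ x, ∀ t ∈ Icc a b, HasFDerivAt (fun q : ℝ × ℝ => F q.1 q.2)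
      (F' x t • ContinuousLinearMap.fst ℝ ℝ ℝ
        + (-C x t * F' x t) • ContinuousLinearMap.snd ℝ ℝ ℝ) (x, t))
    (hF' : ContinuousOn (fun q : ℝ × ℝ => F' q.1 q.2) (univ ×ˢ Icc a b))
    (hC : ∀ x, ∀ t ∈ Icc a b, HasDerivAt (fun y => C y t) (C' x t) x)
    (hC' : ContinuousOn (fun q : ℝ × ℝ => C' q.1 q.2) (univ ×ˢ Icc a b))
    (hX : ∀ t ∈ Icc a b, HasDerivWithinAt X (C (X t) t) (Icc a b) t)
    (hJ : ∀ t ∈ Icc a b, HasDerivWithinAt J (C' (X t) t * J t) (Icc a b) t) :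
    (fun h => F (X b + h * J b) b - F (X a + h * J a) a) =o[nhds 0] fun h => h := by
  have hXc : ContinuousOn X (Icc a b) := fun t ht => (hX t ht).continuousWithinAt
  obtain ⟨MJ, hMJ⟩ := isCompact_Icc.exists_bound_of_continuousOn
    fun t ht => (hJ t ht).continuousWithinAt
  obtain ⟨MF, hMF⟩ := (isCompact_Icc.prod isCompact_Icc).exists_bound_of_continuousOn
    (continuousOn_tube hF' hXc)
  have hMJ0 : 0 ≤ MJ := (norm_nonneg _).trans (hMJ a (left_mem_Icc.2 hab))
  have hMF0 : 0 ≤ MF := (norm_nonneg _).trans (hMF (a, 0) ⟨left_mem_Icc.2 hab, by simp⟩)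
  rw [Asymptotics.isLittleO_iff]
  intro k hk
  have hden : 0 < MF * MJ * (b - a) + 1 := by
    have := sub_nonneg.2 hab
    positivity
  obtain ⟨δ, hδ, hexp⟩ := exists_forall_abs_sub_sub_mul_le isCompact_Icc hXc hC hC'
    (div_pos hk hden)
  set η := k / (MF * MJ * (b - a) + 1)
  have hη : η * (MF * MJ * (b - a) + 1) = k := div_mul_cancel₀ _ hden.ne'
  have hη0 : 0 < η := div_pos hk hden
  have hsmall : ∀ᶠ h in nhds (0 : ℝ), |h| * MJ < min 1 δ :=
    (by fun_prop : Continuous fun h : ℝ => |h| * MJ).tendsto' 0 0 (by simp)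
      |>.eventually (gt_mem_nhds (by positivity))
  filter_upwards [hsmall] with h hh
  have hhJ : ∀ t ∈ Icc a b, |h * J t| ≤ |h| * MJ := fun t ht => by
    rw [abs_mul]
    exact mul_le_mul_of_nonneg_left (hMJ t ht) (abs_nonneg h)
  have hpath := (convex_Icc a b).norm_image_sub_le_of_norm_hasDerivWithin_le
    (fun t ht => hasDerivWithinAt_comp_perturbed (hF (X t + h * J t) t ht) (hX t ht) (hJ t ht))
    (C := MF * (η * (|h| * MJ))) (fun t ht => ?_) (left_mem_Icc.2 hab) (right_mem_Icc.2 hab)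
  · rw [Real.norm_of_nonneg (sub_nonneg.2 hab)] at hpath
    refine hpath.trans ?_
    rw [← hη, Real.norm_eq_abs]
    nlinarith [mul_nonneg hη0.le (abs_nonneg h)]
  · have hle := (hhJ t ht).trans hh.le
    rw [norm_mul, norm_neg]
    refine mul_le_mul (hMF (t, h * J t) ⟨ht, abs_le.1 (hle.trans (min_le_left _ _))⟩) ?_
      (norm_nonneg _) hMF0
    exact (hexp t ht _ (hle.trans (min_le_right _ _))).trans (by gcongr; exact hhJ t ht)

theorem deriv_mul_eq_of_transport (hab : a ≤ b)
    (hF : ∀ x, ∀ t ∈ Icc a b, HasFDerivAt (fun q : ℝ × ℝ => F q.1 q.2)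
      (F' x t • ContinuousLinearMap.fst ℝ ℝ ℝ
        + (-C x t * F' x t) • ContinuousLinearMap.snd ℝ ℝ ℝ) (x, t))
    (hF' : ContinuousOn (fun q : ℝ × ℝ => F' q.1 q.2) (univ ×ˢ Icc a b))
    (hC : ∀ x, ∀ t ∈ Icc a b, HasDerivAt (fun y => C y t) (C' x t) x)
    (hC' : ContinuousOn (fun q : ℝ × ℝ => C' q.1 q.2) (univ ×ˢ Icc a b))
    (hX : ∀ t ∈ Icc a b, HasDerivWithinAt X (C (X t) t) (Icc a b) t)
    (hJ : ∀ t ∈ Icc a b, HasDerivWithinAt J (C' (X t) t * J t) (Icc a b) t) :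
    F' (X b) b * J b = F' (X a) a * J a := by
  have hD := isLittleO_perturbed_sub hab hF hF' hC hC' hX hJ
  have hderiv : ∀ t ∈ Icc a b,
      HasDerivAt (fun h => F (X t + h * J t) t) (F' (X t) t * J t) 0 := fun t ht => by
    have hx : HasDerivAt (fun y => F y t) (F' (X t) t) (X t + 0 * J t) := by
      simpa using hasDerivAt_fst_of_hasFDerivAt (hF (X t) t ht)
    refine (hx.comp (0 : ℝ)
      (((hasDerivAt_id (0 : ℝ)).mul_const (J t)).const_add (X t))).congr_deriv ?_
    rw [one_mul]
  have hzero : HasDerivAt (fun h => F (X b + h * J b) b - F (X a + h * J a) a) 0 0 := by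
    rw [hasDerivAt_iff_isLittleO]
    have h0 : F (X b + 0 * J b) b - F (X a + 0 * J a) a = 0 := by
      simpa using (hD.bound (c := 1) one_pos).self_of_nhds
    simpa only [h0, sub_zero, smul_zero] using hD
  exact sub_eq_zero.1
    (((hderiv b (right_mem_Icc.2 hab)).sub (hderiv a (left_mem_Icc.2 hab))).unique hzero)

lemma exists_hasDerivWithinAt_mul_self {k : ℝ → ℝ} (hk : ContinuousOn k (Icc a b)) :
    ∃ J : ℝ → ℝ, J a = 1 ∧ (∀ t, 0 < J t) ∧
      ∀ t ∈ Icc a b, HasDerivWithinAt J (k t * J t) (Icc a b) t := by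
  refine ⟨fun t => Real.exp (∫ s in a..t, k s), by simp, fun t => Real.exp_pos _, fun t ht => ?_⟩
  have : Fact (t ∈ Icc a b) := ⟨ht⟩
  have hint : IntervalIntegrable k volume a t := by
    refine ContinuousOn.intervalIntegrable ?_
    rw [uIcc_of_le ht.1]
    exact hk.mono (Icc_subset_Icc_right ht.2)
  refine (intervalIntegral.integral_hasDerivWithinAt_right hint
    (hk.stronglyMeasurableAtFilter_nhdsWithin measurableSet_Icc t) (hk t ht)).exp.congr_deriv ?_
  ring

end Transport

section Blowup

lemma exists_forall_neg_of_deriv_le_neg_div {a k N B : ℝ} (ha : 0 ≤ a) (hk : 0 < k) (hN : 0 < N)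
    (hB : 0 < B) (y₀ : ℝ) :
    ∃ b, a ≤ b ∧ ∀ y y' : ℝ → ℝ, y a ≤ y₀ →
      (∀ t ∈ Icc a b, HasDerivWithinAt y (y' t) (Icc a b) t) →
      (∀ t ∈ Icc a b, y' t ≤ -(k / (N + B * t))) → y b < 0 := by
  have hlog : Tendsto (fun t => k / B * Real.log (N + B * t)) atTop atTop :=
    (Real.tendsto_log_atTop.comp (tendsto_atTop_add_const_left _ N
      (tendsto_id.const_mul_atTop hB))).const_mul_atTop (by positivity)
  obtain ⟨b, hb, hab⟩ := ((hlog.eventually_gt_atTop (y₀ + k / B * Real.log (N + B * a))).and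
    (eventually_ge_atTop a)).exists
  refine ⟨b, hab, fun y y' hya hy hle => ?_⟩
  have hderiv : ∀ t ∈ Icc a b, HasDerivWithinAt (fun t => y t + k / B * Real.log (N + B * t))
      (y' t + k / (N + B * t)) (Icc a b) t := fun t ht => by
    have hpos : 0 < N + B * t := by nlinarith [ha.trans ht.1]
    refine ((hy t ht).add (((((hasDerivAt_id t).const_mul B).const_add N).log
      hpos.ne').const_mul (k / B)).hasDerivWithinAt).congr_deriv ?_
    rw [id_eq]
    field
  have hanti := antitoneOn_of_hasDerivWithinAt_nonpos (convex_Icc a b)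
    (fun t ht => (hderiv t ht).continuousWithinAt)
    (fun t ht => (hderiv t (interior_subset ht)).mono interior_subset)
    (fun t ht => by linarith [hle t (interior_subset ht)])
    (left_mem_Icc.2 hab) (right_mem_Icc.2 hab) hab
  dsimp only at hanti
  linarith

namespace GenPSysSol

variable {p : ℝ → ℝ} {τ u : ℝ → ℝ → ℝ} (hP : IsConvexPressure p)
  (hsol : GenPSysSol p (Ici 0) 1 τ u) {x t a b : ℝ} {σ : ℤˣ} {v₀ B N ε : ℝ}
include hP hsol

lemma derivX_velocity_le
    (hslope : ∀ (σ : ℤˣ) x y, x ≤ y → riemannInv p τ u σ y t - riemannInv p τ u σ x t ≤ B * (y - x))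
    (ht : 0 < t) : derivX u x t ≤ B := by
  have hmono : Monotone fun y => B * y - u y t := fun y z hyz => by
    have h1 := hslope 1 y z hyz
    have h2 := hslope (-1) y z hyz
    simp only [riemannInv, Units.val_one, Units.val_neg, Int.cast_one, Int.cast_neg] at h1 h2
    dsimp only
    linarith
  have hderiv : HasDerivAt (fun y => B * y - u y t) (B - derivX u x t) x :=
    (((hasDerivAt_id x).const_mul B).sub (hasDerivAt_fst_of_hasFDerivAt
      (hsol.hasFDerivAt_velocity hP ht))).congr_deriv (by simp)
  linarith [hderiv.deriv ▸ hmono.deriv_nonneg (x := x)]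

omit hP in
lemma specificVolume_le (hu : ∀ x t, 0 < t → derivX u x t ≤ B) (ht : 0 ≤ t) :
    τ x t ≤ τ x 0 + B * t := by
  have hcont : ContinuousOn (τ x) (Icc 0 t) :=
    hsol.2.1.continuousOn.comp (f := fun s : ℝ => (x, s)) (by fun_prop) fun s hs => ⟨trivial, hs.1⟩
  have hderiv : ∀ s ∈ interior (Icc 0 t), HasDerivAt (τ x) (derivX u x s) s := fun s hs => by
    rw [interior_Icc] at hs
    exact (hasDerivAt_snd_of_hasFDerivAt (hsol.hasFDerivAt_specificVolume hs.1)).congr_deriv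
      (by simp)
  have := (convex_Icc 0 t).image_sub_le_mul_sub_of_deriv_le hcont
    (fun s hs => (hderiv s hs).differentiableAt.differentiableWithinAt)
    (fun s hs => (hderiv s hs).deriv ▸ hu x s (interior_Icc (a := (0 : ℝ)) ▸ hs).1)
    0 ⟨le_rfl, ht⟩ t ⟨ht, le_rfl⟩ ht
  linarith

lemma hasDerivAt_speed (ht : 0 < t) : HasDerivAt (fun y => (σ : ℤ) * soundSpeed p (τ y t))
    ((σ : ℤ) * (deriv (soundSpeed p) (τ x t) * derivX τ x t)) x :=
  (((hP.hasDerivAt_soundSpeed' (hsol.1 x t ht.le)).comp x (hasDerivAt_fst_of_hasFDerivAt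
    (hsol.hasFDerivAt_specificVolume ht))).const_mul _).congr_deriv (by simp)

omit hP in
lemma continuousOn_comp_specificVolume {f : ℝ → ℝ} (hf : ContinuousOn f (Ioi 0)) :
    ContinuousOn (fun q : ℝ × ℝ => f (τ q.1 q.2)) (univ ×ˢ Ici 0) :=
  hf.comp hsol.2.1.continuousOn fun q hq => hsol.1 q.1 q.2 hq.2

lemma continuousOn_derivX_speed :
    ContinuousOn (fun q : ℝ × ℝ => (σ : ℤ) * (deriv (soundSpeed p) (τ q.1 q.2) * derivX τ q.1 q.2))
      (univ ×ˢ Ioi 0) :=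
  continuousOn_const.mul (((hsol.continuousOn_comp_specificVolume
    hP.continuousOn_deriv_soundSpeed).mono (prod_mono_right Ioi_subset_Ici_self)).mul
    (continuousOn_derivX_of_contDiffOn hsol.2.1))

lemma continuousOn_derivX_riemannInv :
    ContinuousOn (fun q : ℝ × ℝ => derivX (riemannInv p τ u σ) q.1 q.2) (univ ×ˢ Ioi 0) := by
  refine ((continuousOn_derivX_of_contDiffOn hsol.2.2.1).sub
    (((continuousOn_const (c := ((σ : ℤ) : ℝ))).mul
    ((hsol.continuousOn_comp_specificVolume hP.continuousOn_soundSpeed).mono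
      (prod_mono_right Ioi_subset_Ici_self))).mul
    (continuousOn_derivX_of_contDiffOn hsol.2.1))).congr fun q hq => ?_
  exact hsol.derivX_riemannInv hP hq.2

lemma exists_characteristic (hv₀ : 0 < v₀) (hτ : ∀ x t, 0 ≤ t → v₀ ≤ τ x t) (ha : 0 < a)
    (hab : a ≤ b) (σ : ℤˣ) (x₀ : ℝ) : ∃ X : ℝ → ℝ, X a = x₀ ∧
      ∀ t ∈ Icc a b, HasDerivWithinAt X ((σ : ℤ) * soundSpeed p (τ (X t) t)) (Icc a b) t := by
  have hK := (hP.soundSpeed_pos hv₀).le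
  have hpos : ∀ t ∈ Icc a b, 0 < t := fun t ht => ha.trans_le ht.1
  set r := soundSpeed p v₀ * (b - a)
  have hr : 0 ≤ r := mul_nonneg hK (sub_nonneg.2 hab)
  obtain ⟨L, hL⟩ := (isCompact_Icc.prod isCompact_Icc).exists_bound_of_continuousOn
    ((hsol.continuousOn_derivX_speed hP (σ := σ)).mono
      fun q (hq : q ∈ Icc (x₀ - r) (x₀ + r) ×ˢ Icc a b) => ⟨trivial, hpos _ hq.2⟩)
  have hPL : IsPicardLindelof (fun t x => (σ : ℤ) * soundSpeed p (τ x t))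
      (⟨a, left_mem_Icc.2 hab⟩ : Icc a b) x₀ ⟨r, hr⟩ 0 ⟨soundSpeed p v₀, hK⟩ L.toNNReal := by
    refine ⟨fun t ht => ?_, fun x _ => ?_, fun t ht x _ => ?_, ?_⟩
    · refine (convex_closedBall _ _).lipschitzOnWith_of_nnnorm_hasDerivWithin_le
        (fun x _ => (hsol.hasDerivAt_speed hP (hpos t ht)).hasDerivWithinAt) fun x hx => ?_
      rw [Real.closedBall_eq_Icc] at hx
      rw [← NNReal.coe_le_coe, coe_nnnorm]
      exact (hL (x, t) ⟨hx, ht⟩).trans (Real.le_coe_toNNReal _)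
    · exact continuousOn_const.mul ((hsol.continuousOn_comp_specificVolume
        hP.continuousOn_soundSpeed).comp (f := fun t => (x, t)) (by fun_prop)
        fun t ht => ⟨trivial, (hpos t ht).le⟩)
    · rw [Real.norm_eq_abs, ← abs_neg]
      exact abs_units_mul_soundSpeed_le hP hv₀ (hτ x t (hpos t ht).le) σ
    · simp only [max_eq_left (by linarith : a - a ≤ b - a), NNReal.coe_zero, sub_zero]
      exact le_rfl
  exact hPL.exists_eq_forall_mem_Icc_hasDerivWithinAt₀

lemma hasDerivWithinAt_div_sqrt_soundSpeed {X J : ℝ → ℝ} {I : Set ℝ} (ht : 0 < t)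
    (hX : HasDerivWithinAt X ((σ : ℤ) * soundSpeed p (τ (X t) t)) I t)
    (hJ : HasDerivWithinAt J ((σ : ℤ) * (deriv (soundSpeed p) (τ (X t) t) * derivX τ (X t) t)
      * J t) I t) :
    HasDerivWithinAt (fun t => J t / √(soundSpeed p (τ (X t) t)))
      (derivX (riemannInv p τ u σ) (X t) t * J t * (-deriv (soundSpeed p) (τ (X t) t) /
        (2 * (soundSpeed p (τ (X t) t) * √(soundSpeed p (τ (X t) t)))))) I t := by
  have hv := hsol.1 (X t) t ht.le
  have hc := hP.soundSpeed_pos hv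
  have hτ : HasDerivWithinAt (fun t => τ (X t) t)
      (derivX u (X t) t + (σ : ℤ) * soundSpeed p (τ (X t) t) * derivX τ (X t) t) I t := by
    refine ((hsol.hasFDerivAt_specificVolume ht).comp_hasDerivWithinAt (f := fun t => (X t, t)) t
      (hX.prodMk (hasDerivWithinAt_id _ _))).congr_deriv ?_
    simp
    ring
  have hcτ := ((hP.hasDerivAt_soundSpeed' hv).comp_hasDerivWithinAt (h := fun t => τ (X t) t)
    t hτ).sqrt hc.ne'
  refine (hJ.div hcτ (Real.sqrt_pos.2 hc).ne').congr_deriv ?_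
  simp only [Function.comp_apply, hsol.derivX_riemannInv hP ht]
  rw [Real.sq_sqrt hc.le]
  have hsqrt := Real.sq_sqrt hc.le
  have hsqrt_pos := Real.sqrt_pos.2 hc
  set w := √(soundSpeed p (τ (X t) t))
  rw [← hsqrt]
  field

/-- Along a characteristic `∂ₓz_σ · J` is conserved for `J = exp ∫ σ ∂ₓ(c ∘ τ)`, and
`(J / √c)' = ∂ₓz_σ · J · (-c' / (2 c √c))`. If `∂ₓz_σ` is negative at one point, the growth
condition makes the positive quantity `J / √c` decrease logarithmically. -/
theorem derivX_riemannInv_nonneg (hv₀ : 0 < v₀) (hτ : ∀ x t, 0 ≤ t → v₀ ≤ τ x t) (hN : 0 < N)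
    (hB : 0 < B) (hτ' : ∀ x t, 0 ≤ t → 1 + τ x t ≤ N + B * t) (hε : 0 < ε)
    (hgrowth : ∀ v, v₀ ≤ v →
      ε / (1 + v) ≤ -deriv (soundSpeed p) v / (2 * (soundSpeed p v * √(soundSpeed p v))))
    (ht : 0 < t) (σ : ℤˣ) : 0 ≤ derivX (riemannInv p τ u σ) x t := by
  by_contra! hneg
  set d := derivX (riemannInv p τ u σ) x t
  obtain ⟨b, htb, hb⟩ := exists_forall_neg_of_deriv_le_neg_div ht.le
    (mul_pos (neg_pos.2 hneg) hε) hN hB (1 / √(soundSpeed p (τ x t)))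
  obtain ⟨X, hXt, hX⟩ := hsol.exists_characteristic hP hv₀ hτ ht htb σ x
  have hpos : ∀ s ∈ Icc t b, 0 < s := fun s hs => ht.trans_le hs.1
  have hIcc : ∀ s, univ ×ˢ Icc t s ⊆ (univ ×ˢ Ioi 0 : Set (ℝ × ℝ)) := fun s =>
    prod_mono_right fun r hr => ht.trans_le hr.1
  obtain ⟨J, hJt, hJpos, hJ⟩ := exists_hasDerivWithinAt_mul_self
    ((hsol.continuousOn_derivX_speed hP (σ := σ)).comp (f := fun s => (X s, s))
      (ContinuousOn.prodMk (fun s hs => (hX s hs).continuousWithinAt) continuousOn_id)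
      fun s hs => ⟨trivial, hpos s hs⟩)
  have hconserved : ∀ s ∈ Icc t b, derivX (riemannInv p τ u σ) (X s) s * J s = d := fun s hs => by
    have hsub : Icc t s ⊆ Icc t b := Icc_subset_Icc_right hs.2
    rw [deriv_mul_eq_of_transport hs.1 (F := riemannInv p τ u σ)
      (C := fun x t => (σ : ℤ) * soundSpeed p (τ x t))
      (fun y r hr => (hsol.derivX_riemannInv hP (hpos r (hsub hr))) ▸
        hsol.hasFDerivAt_riemannInv hP (hpos r (hsub hr)))
      ((hsol.continuousOn_derivX_riemannInv hP).mono (hIcc s))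
      (fun y r hr => hsol.hasDerivAt_speed hP (hpos r (hsub hr)))
      ((hsol.continuousOn_derivX_speed hP).mono (hIcc s))
      (fun r hr => (hX r (hsub hr)).mono hsub) (fun r hr => (hJ r (hsub hr)).mono hsub),
      hJt, hXt, mul_one]
  refine (hb _ _ (by simp [hXt, hJt]) (fun s hs => hsol.hasDerivWithinAt_div_sqrt_soundSpeed hP
    (hpos s hs) (hX s hs) (hJ s hs)) fun s hs => ?_).not_ge
    (div_nonneg (hJpos b).le (Real.sqrt_nonneg _))
  have hv := hτ (X s) s (hpos s hs).le
  have hle : ε / (N + B * s) ≤ ε / (1 + τ (X s) s) :=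
    div_le_div_of_nonneg_left hε.le (by linarith) (hτ' _ _ (hpos s hs).le)
  rw [hconserved s hs, mul_div_assoc, neg_mul, neg_neg]
  exact mul_le_mul_of_nonpos_left (hle.trans (hgrowth _ hv)) hneg.le

lemma monotone_riemannInv_initial (h : ∀ x t, 0 < t → 0 ≤ derivX (riemannInv p τ u σ) x t) :
    Monotone fun x => riemannInv p τ u σ x 0 := fun x y hxy => by
  have hmono : ∀ t, 0 < t → Monotone fun x => riemannInv p τ u σ x t := fun t ht =>
    monotone_of_deriv_nonneg (fun x => (hasDerivAt_fst_of_hasFDerivAt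
      (hsol.hasFDerivAt_riemannInv hP ht)).differentiableAt) fun x => h x t ht
  have hlim : ∀ x, Tendsto (riemannInv p τ u σ x) (nhdsWithin 0 (Ioi 0))
      (nhds (riemannInv p τ u σ x 0)) := fun x =>
    ((((hsol.continuousOn_riemannInv hP σ).comp (f := fun t : ℝ => (x, t)) (by fun_prop)
      fun t ht => ⟨trivial, ht⟩) 0 self_mem_Ici).tendsto).mono_left
      (nhdsWithin_mono _ Ioi_subset_Ici_self)
  refine le_of_tendsto_of_tendsto (hlim x) (hlim y) ?_
  filter_upwards [self_mem_nhdsWithin] with t ht using hmono t ht hxy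

end GenPSysSol

end Blowup

section Necessity

variable {p : ℝ → ℝ} (hP : IsConvexPressure p) {τ u : ℝ → ℝ → ℝ} {τ₀ u₀ : ℝ → ℝ} {M₁ M₂ : ℝ}

namespace AssumptionA

variable (hA : AssumptionA M₁ M₂ τ₀ u₀)
include hA

lemma pos (x : ℝ) : 0 < τ₀ x := hA.2.2.2.1.trans_le (hA.2.2.2.2.2 x)

lemma specificVolume_le (x : ℝ) : τ₀ x ≤ M₁ := by
  linarith [hA.2.2.2.2.1 x, le_abs_self (τ₀ x), abs_nonneg (deriv τ₀ x), abs_nonneg (u₀ x),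
    abs_nonneg (deriv u₀ x)]

lemma abs_velocity_le (x : ℝ) : |u₀ x| ≤ M₁ := by
  linarith [hA.2.2.2.2.1 x, abs_nonneg (τ₀ x), abs_nonneg (deriv τ₀ x), abs_nonneg (deriv u₀ x)]

lemma abs_deriv_specificVolume_le (x : ℝ) : |deriv τ₀ x| ≤ M₁ := by
  linarith [hA.2.2.2.2.1 x, abs_nonneg (τ₀ x), abs_nonneg (u₀ x), abs_nonneg (deriv u₀ x)]

lemma abs_deriv_velocity_le (x : ℝ) : |deriv u₀ x| ≤ M₁ := by
  linarith [hA.2.2.2.2.1 x, abs_nonneg (τ₀ x), abs_nonneg (deriv τ₀ x), abs_nonneg (u₀ x)]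

include hP

lemma hasDerivAt_riemannInv (σ : ℤˣ) (x : ℝ) :
    HasDerivAt (fun x => u₀ x + (σ : ℤ) * soundPotential p (τ₀ x))
      (deriv u₀ x - (σ : ℤ) * (soundSpeed p (τ₀ x) * deriv τ₀ x)) x :=
  ((hA.2.1.differentiable one_ne_zero x).hasDerivAt.add
    (((hP.hasDerivAt_soundPotential (hA.pos x)).comp x
      (hA.1.differentiable one_ne_zero x).hasDerivAt).const_mul _)).congr_deriv (by ring)

lemma deriv_riemannInv_le (σ : ℤˣ) (x : ℝ) :
    deriv u₀ x - (σ : ℤ) * (soundSpeed p (τ₀ x) * deriv τ₀ x) ≤ M₁ + soundSpeed p M₂ * M₁ := by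
  have hM₂ := hA.2.2.2.1
  have hle : |soundSpeed p (τ₀ x) * deriv τ₀ x| ≤ soundSpeed p M₂ * M₁ := by
    rw [abs_mul, abs_of_pos (hP.soundSpeed_pos (hA.pos x))]
    exact mul_le_mul (hP.antitoneOn_soundSpeed hM₂ (hA.pos x) (hA.2.2.2.2.2 x))
      (hA.abs_deriv_specificVolume_le x) (abs_nonneg _) (hP.soundSpeed_pos hM₂).le
  have hu := (abs_le.1 (hA.abs_deriv_velocity_le x)).2
  obtain ⟨hlow, hupp⟩ := abs_le.1 hle
  rcases Int.units_eq_one_or σ with rfl | rfl <;> simp <;> linarith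

lemma mul_riemannInv_le (σ : ℤˣ) (x : ℝ) :
    (σ : ℤ) * (u₀ x + (σ : ℤ) * soundPotential p (τ₀ x)) ≤ M₁ + soundPotential p M₂ := by
  have hφ := hP.strictAntiOn_soundPotential.antitoneOn hA.2.2.2.1 (hA.pos x) (hA.2.2.2.2.2 x)
  obtain ⟨hlow, hupp⟩ := abs_le.1 (hA.abs_velocity_le x)
  rcases Int.units_eq_one_or σ with rfl | rfl <;> simp <;> linarith

end AssumptionA

include hP

theorem GenPSysSol.monotone_riemannInv (hsol : GenPSysSol p (Ici 0) 1 τ u)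
    (hA : AssumptionA M₁ M₂ (fun x => τ x 0) fun x => u x 0)
    (hint : ¬ IntegrableOn (soundSpeed p) (Ioo 0 1))
    (hgrowth : ∀ m > 0, ∃ ε > 0, ∀ v, m ≤ v →
      ε / (1 + v) ≤ -deriv (soundSpeed p) v / (2 * (soundSpeed p v * √(soundSpeed p v))))
    (σ : ℤˣ) : Monotone fun x => u x 0 + (σ : ℤ) * soundPotential p (τ x 0) := by
  have hM₁ := hA.2.2.1
  obtain ⟨v₀, hv₀, hW⟩ := hP.exists_lt_soundPotential hint (M₁ + soundPotential p M₂)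
  have hlower : ∀ x t, 0 ≤ t → v₀ ≤ τ x t := fun x t ht =>
    hsol.le_specificVolume hP hv₀ hW (fun σ x => hA.mul_riemannInv_le hP σ x) x ht
  set B := M₁ + soundSpeed p M₂ * M₁
  have hB : 0 < B := add_pos hM₁ (mul_pos (hP.soundSpeed_pos hA.2.2.2.1) hM₁)
  have hslope₀ : ∀ (σ : ℤˣ) x y, x ≤ y →
      riemannInv p τ u σ y 0 - riemannInv p τ u σ x 0 ≤ B * (y - x) := fun σ x y hxy =>
    image_sub_le_mul_sub_of_deriv_le (fun x => (hA.hasDerivAt_riemannInv hP σ x).differentiableAt)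
      (fun x => (hA.hasDerivAt_riemannInv hP σ x).deriv ▸ hA.deriv_riemannInv_le hP σ x) hxy
  have hupper : ∀ x t, 0 ≤ t → 1 + τ x t ≤ (1 + M₁) + B * t := fun x t ht => by
    have := hsol.specificVolume_le (x := x) (fun x t ht => hsol.derivX_velocity_le hP
      (fun σ x y hxy => hsol.riemannInv_sub_le hP hB.le hv₀ hlower hslope₀ hxy ht.le σ) ht) ht
    linarith [hA.specificVolume_le x]
  obtain ⟨ε, hε, hgrowth⟩ := hgrowth v₀ hv₀
  exact hsol.monotone_riemannInv_initial hP fun x t ht => hsol.derivX_riemannInv_nonneg hP hv₀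
    hlower (by linarith) hB hupper hε hgrowth ht σ

end Necessity

section Goursat

/-- A subset of the plane that contains, with each of its points `q`, the horizontal and the
vertical segment joining `q` to the diagonal: the domains of dependence of Goursat problems with
data on the diagonal. -/
def IsSegmentClosed (D : Set (ℝ × ℝ)) : Prop :=
  ∀ q ∈ D, ∀ z ∈ uIcc q.1 q.2, (z, q.2) ∈ D ∧ (q.1, z) ∈ D

/-- An open set exhausted locally by compact domains of dependence, on which Goursat problems with
data on the diagonal can be solved. -/
def HasSegmentClosedNhds (Ω : Set (ℝ × ℝ)) : Prop :=
  ∀ q ∈ Ω, ∃ K ∈ nhds q, IsCompact K ∧ IsSegmentClosed K ∧ K ⊆ Ω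

lemma IsSegmentClosed.inter {D E : Set (ℝ × ℝ)} (hD : IsSegmentClosed D) (hE : IsSegmentClosed E) :
    IsSegmentClosed (D ∩ E) := fun q hq z hz =>
  ⟨⟨(hD q hq.1 z hz).1, (hE q hq.2 z hz).1⟩, ⟨(hD q hq.1 z hz).2, (hE q hq.2 z hz).2⟩⟩

lemma isSegmentClosed_closedBall_zero (L : ℝ) : IsSegmentClosed (Metric.closedBall 0 L) := by
  intro q hq z hz
  simp only [mem_closedBall_zero_iff, Prod.norm_def, max_le_iff, Real.norm_eq_abs] at hq ⊢
  have hzL : |z| ≤ L := by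
    rcases mem_uIcc.1 hz with ⟨h₁, h₂⟩ | ⟨h₁, h₂⟩
    · exact (abs_le_max_abs_abs h₁ h₂).trans (max_le hq.1 hq.2)
    · exact (abs_le_max_abs_abs h₁ h₂).trans (max_le hq.2 hq.1)
  exact ⟨⟨hzL, hq.2⟩, hq.1, hzL⟩

lemma HasSegmentClosedNhds.isOpen {Ω : Set (ℝ × ℝ)} (hΩ : HasSegmentClosedNhds Ω) : IsOpen Ω :=
  isOpen_iff_mem_nhds.2 fun q hq => let ⟨_, hK, _, _, hKΩ⟩ := hΩ q hq; mem_of_superset hK hKΩ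

lemma HasSegmentClosedNhds.isSegmentClosed {Ω : Set (ℝ × ℝ)} (hΩ : HasSegmentClosedNhds Ω) :
    IsSegmentClosed Ω := fun q hq z hz =>
  let ⟨_, hK, _, hKseg, hKΩ⟩ := hΩ q hq
  ⟨hKΩ (hKseg q (mem_of_mem_nhds hK) z hz).1, hKΩ (hKseg q (mem_of_mem_nhds hK) z hz).2⟩

lemma continuous_integral_fst_snd {F : ℝ × ℝ → ℝ → ℝ} (hF : Continuous (Function.uncurry F)) :
    Continuous fun q : ℝ × ℝ => ∫ z in q.1..q.2, F q z := by
  have hsplit (q : ℝ × ℝ) :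
      (∫ z in (0 : ℝ)..q.2, F q z) - (∫ z in (0 : ℝ)..q.1, F q z) = ∫ z in q.1..q.2, F q z := by
    have hint (z : ℝ) : IntervalIntegrable (F q) volume 0 z :=
      (hF.comp (Continuous.prodMk_right q)).intervalIntegrable _ _
    exact intervalIntegral.integral_interval_sub_left (hint _) (hint _)
  simp only [← hsplit]
  exact (intervalIntegral.continuous_parametric_intervalIntegral_of_continuous hF
    continuous_snd).sub (intervalIntegral.continuous_parametric_intervalIntegral_of_continuous hF
    continuous_fst)

lemma exists_continuous_eqOn {X : Type*} [TopologicalSpace X] [NormalSpace X] {K : Set X}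
    {f : X → ℝ} (hK : IsClosed K) (hf : ContinuousOn f K) :
    ∃ g : X → ℝ, Continuous g ∧ EqOn g f K := by
  obtain ⟨g, hg⟩ := ContinuousMap.exists_restrict_eq hK ⟨K.domRestrict f, hf.domRestrict⟩
  exact ⟨g, g.continuous, fun x hx => DFunLike.congr_fun hg ⟨x, hx⟩⟩

section Continuity

variable {Ω : Set (ℝ × ℝ)} {f : ℝ × ℝ → ℝ}

lemma HasSegmentClosedNhds.continuousOn_integral_left (hΩ : HasSegmentClosedNhds Ω)
    (hf : ContinuousOn f Ω) : ContinuousOn (fun q : ℝ × ℝ => ∫ x in q.1..q.2, f (x, q.2)) Ω := by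
  intro q hq
  obtain ⟨K, hK, hKc, hKseg, hKΩ⟩ := hΩ q hq
  obtain ⟨g, hg, hgf⟩ := exists_continuous_eqOn hKc.isClosed (hf.mono hKΩ)
  have hcont : Continuous fun q : ℝ × ℝ => ∫ x in q.1..q.2, g (x, q.2) :=
    continuous_integral_fst_snd (F := fun q x => g (x, q.2)) (by fun_prop)
  refine (hcont.continuousAt.congr ?_).continuousWithinAt
  filter_upwards [hK] with q' hq'
  exact intervalIntegral.integral_congr fun x hx => hgf (hKseg q' hq' x hx).1

lemma HasSegmentClosedNhds.continuousOn_integral_right (hΩ : HasSegmentClosedNhds Ω)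
    (hf : ContinuousOn f Ω) : ContinuousOn (fun q : ℝ × ℝ => ∫ y in q.1..q.2, f (q.1, y)) Ω := by
  intro q hq
  obtain ⟨K, hK, hKc, hKseg, hKΩ⟩ := hΩ q hq
  obtain ⟨g, hg, hgf⟩ := exists_continuous_eqOn hKc.isClosed (hf.mono hKΩ)
  have hcont : Continuous fun q : ℝ × ℝ => ∫ y in q.1..q.2, g (q.1, y) :=
    continuous_integral_fst_snd (F := fun q y => g (q.1, y)) (by fun_prop)
  refine (hcont.continuousAt.congr ?_).continuousWithinAt
  filter_upwards [hK] with q' hq'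
  exact intervalIntegral.integral_congr fun y hy => hgf (hKseg q' hq' y hy).2

lemma IsSegmentClosed.continuousOn_left (hΩ : IsSegmentClosed Ω) (hf : ContinuousOn f Ω)
    {q : ℝ × ℝ} (hq : q ∈ Ω) : ContinuousOn (fun x => f (x, q.2)) (uIcc q.1 q.2) :=
  hf.comp (by fun_prop) fun x hx => (hΩ q hq x hx).1

lemma IsSegmentClosed.continuousOn_right (hΩ : IsSegmentClosed Ω) (hf : ContinuousOn f Ω)
    {q : ℝ × ℝ} (hq : q ∈ Ω) : ContinuousOn (fun y => f (q.1, y)) (uIcc q.1 q.2) :=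
  hf.comp (by fun_prop) fun y hy => (hΩ q hq y hy).2

end Continuity

/-- The linear Volterra operator of the Goursat problem with data on the diagonal and coefficients
`a`, `b`. -/
noncomputable def volterraOp (a b f : ℝ × ℝ → ℝ) (q : ℝ × ℝ) : ℝ :=
  a q * (∫ x in q.1..q.2, f (x, q.2)) + b q * ∫ y in q.1..q.2, f (q.1, y)

/-- The Neumann series `∑ₙ Tⁿ w` solving `V = w + T V` for the Volterra operator `T` with
coefficients `a`, `b`. -/
noncomputable def goursatSol (a b w : ℝ × ℝ → ℝ) (q : ℝ × ℝ) : ℝ :=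
  ∑' n, (volterraOp a b)^[n] w q

lemma abs_integral_le_of_abs_le_pow {f : ℝ → ℝ} {a b K : ℝ} {n : ℕ}
    (h : ∀ x ∈ uIcc a b, |f x| ≤ K * |x - a| ^ n) :
    |∫ x in a..b, f x| ≤ K * (|b - a| ^ (n + 1) / (n + 1)) := by
  rw [← Real.norm_eq_abs, intervalIntegral.norm_intervalIntegral_eq, ← integral_pow_abs_sub_uIoc,
    ← integral_const_mul]
  have hcont : Continuous fun x : ℝ => K * |x - a| ^ n := by fun_prop
  refine norm_integral_le_of_norm_le
    ((hcont.integrableOn_uIcc (a := a) (b := b)).mono_set uIoc_subset_uIcc) ?_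
  rw [ae_restrict_iff' measurableSet_uIoc]
  exact Eventually.of_forall fun x hx => h x (uIoc_subset_uIcc hx)

variable {a b w : ℝ × ℝ → ℝ} {Ω D : Set (ℝ × ℝ)}

lemma HasSegmentClosedNhds.continuousOn_iterate_volterraOp (hΩ : HasSegmentClosedNhds Ω)
    (ha : ContinuousOn a Ω) (hb : ContinuousOn b Ω) (hw : ContinuousOn w Ω) (n : ℕ) :
    ContinuousOn ((volterraOp a b)^[n] w) Ω := by
  induction n with
  | zero => exact hw
  | succ n ih =>
    rw [Function.iterate_succ_apply']
    exact (ha.mul (hΩ.continuousOn_integral_left ih)).add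
      (hb.mul (hΩ.continuousOn_integral_right ih))

lemma IsSegmentClosed.abs_iterate_volterraOp_le (hD : IsSegmentClosed D) {A C : ℝ}
    (ha : ∀ q ∈ D, |a q| ≤ A) (hb : ∀ q ∈ D, |b q| ≤ A) (hw : ∀ q ∈ D, |w q| ≤ C) (n : ℕ) :
    ∀ q ∈ D, |(volterraOp a b)^[n] w q| ≤ C * ((2 * A) ^ n / n.factorial) * |q.2 - q.1| ^ n := by
  induction n with
  | zero => simpa using hw
  | succ n ih =>
    intro q hq
    set f := (volterraOp a b)^[n] w
    set I := C * ((2 * A) ^ n / n.factorial) * (|q.2 - q.1| ^ (n + 1) / (n + 1))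
    have hleft : |∫ x in q.1..q.2, f (x, q.2)| ≤ I := by
      rw [intervalIntegral.integral_symm, abs_neg]
      simp only [I, abs_sub_comm q.2 q.1]
      refine abs_integral_le_of_abs_le_pow fun x hx => ?_
      rw [abs_sub_comm]
      exact ih _ (hD q hq x (by rwa [uIcc_comm])).1
    have hright : |∫ y in q.1..q.2, f (q.1, y)| ≤ I :=
      abs_integral_le_of_abs_le_pow fun y hy => ih _ (hD q hq y hy).2
    have hA : 0 ≤ A := (abs_nonneg _).trans (ha q hq)
    rw [Function.iterate_succ_apply']
    calc |volterraOp a b f q|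
        ≤ |a q| * |∫ x in q.1..q.2, f (x, q.2)| + |b q| * |∫ y in q.1..q.2, f (q.1, y)| := by
          rw [← abs_mul, ← abs_mul]; exact abs_add_le _ _
      _ ≤ A * I + A * I := by gcongr <;> [exact ha q hq; exact hb q hq]
      _ = C * ((2 * A) ^ (n + 1) / (n + 1).factorial) * |q.2 - q.1| ^ (n + 1) := by
          rw [Nat.factorial_succ]; push_cast; simp only [I]; field_simp; ring

lemma IsSegmentClosed.exists_summable_bound (hD : IsSegmentClosed D) (hDc : IsCompact D)
    (ha : ContinuousOn a D) (hb : ContinuousOn b D) (hw : ContinuousOn w D) :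
    ∃ v : ℕ → ℝ, Summable v ∧ ∀ n, ∀ q ∈ D, |(volterraOp a b)^[n] w q| ≤ v n := by
  obtain ⟨A₁, hA₁⟩ := hDc.exists_bound_of_continuousOn ha
  obtain ⟨A₂, hA₂⟩ := hDc.exists_bound_of_continuousOn hb
  obtain ⟨C, hC⟩ := hDc.exists_bound_of_continuousOn hw
  obtain ⟨L, hL⟩ := hDc.exists_bound_of_continuousOn
    (f := fun q : ℝ × ℝ => q.2 - q.1) (by fun_prop)
  refine ⟨fun n => C * ((2 * max A₁ A₂ * L) ^ n / n.factorial),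
    (Real.summable_pow_div_factorial _).mul_left _, fun n q hq => ?_⟩
  have hC0 : 0 ≤ C := (norm_nonneg _).trans (hC q hq)
  have hA0 : 0 ≤ max A₁ A₂ := (norm_nonneg _).trans ((hA₁ q hq).trans (le_max_left _ _))
  calc |(volterraOp a b)^[n] w q|
      ≤ C * ((2 * max A₁ A₂) ^ n / n.factorial) * |q.2 - q.1| ^ n :=
        hD.abs_iterate_volterraOp_le (fun q hq => (hA₁ q hq).trans (le_max_left _ _))
          (fun q hq => (hA₂ q hq).trans (le_max_right _ _)) hC n q hq
    _ ≤ C * ((2 * max A₁ A₂) ^ n / n.factorial) * L ^ n := by gcongr; exact hL q hq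
    _ = C * ((2 * max A₁ A₂ * L) ^ n / n.factorial) := by rw [mul_pow (2 * max A₁ A₂)]; ring

lemma HasSegmentClosedNhds.continuousOn_goursatSol (hΩ : HasSegmentClosedNhds Ω)
    (ha : ContinuousOn a Ω) (hb : ContinuousOn b Ω) (hw : ContinuousOn w Ω) :
    ContinuousOn (goursatSol a b w) Ω := by
  intro q hq
  obtain ⟨K, hK, hKc, hKseg, hKΩ⟩ := hΩ q hq
  obtain ⟨v, hv, hle⟩ := hKseg.exists_summable_bound hKc (ha.mono hKΩ) (hb.mono hKΩ) (hw.mono hKΩ)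
  have hcont : ContinuousOn (goursatSol a b w) K := continuousOn_tsum
    (fun n => (hΩ.continuousOn_iterate_volterraOp ha hb hw n).mono hKΩ) hv hle
  exact (hcont.continuousAt hK).continuousWithinAt

lemma hasSum_integral_of_abs_le_summable {F : ℕ → ℝ → ℝ} {v : ℕ → ℝ} {α β : ℝ}
    (hF : ∀ n, ContinuousOn (F n) (uIcc α β)) (hv : Summable v)
    (hle : ∀ n, ∀ z ∈ uIcc α β, |F n z| ≤ v n) :
    HasSum (fun n => ∫ z in α..β, F n z) (∫ z in α..β, ∑' n, F n z) := by
  refine intervalIntegral.hasSum_integral_of_dominated_convergence (fun n _ => v n) (fun n => ?_)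
    (fun n => Eventually.of_forall fun z hz => hle n z (uIoc_subset_uIcc hz))
    (Eventually.of_forall fun _ _ => hv) intervalIntegrable_const
    (Eventually.of_forall fun z hz => ?_)
  · exact ((hF n).mono uIoc_subset_uIcc).aestronglyMeasurable measurableSet_uIoc
  · exact (Summable.of_norm_bounded hv fun n => hle n z (uIoc_subset_uIcc hz)).hasSum

lemma HasSegmentClosedNhds.goursatSol_eq (hΩ : HasSegmentClosedNhds Ω) (ha : ContinuousOn a Ω)
    (hb : ContinuousOn b Ω) (hw : ContinuousOn w Ω) {q : ℝ × ℝ} (hq : q ∈ Ω) :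
    goursatSol a b w q = w q + volterraOp a b (goursatSol a b w) q := by
  obtain ⟨K, hK, hKc, hKseg, hKΩ⟩ := hΩ q hq
  have hqK : q ∈ K := mem_of_mem_nhds hK
  obtain ⟨v, hv, hle⟩ := hKseg.exists_summable_bound hKc (ha.mono hKΩ) (hb.mono hKΩ) (hw.mono hKΩ)
  have hcont (n : ℕ) : ContinuousOn ((volterraOp a b)^[n] w) K :=
    (hΩ.continuousOn_iterate_volterraOp ha hb hw n).mono hKΩ
  have hleft : HasSum (fun n => ∫ x in q.1..q.2, (volterraOp a b)^[n] w (x, q.2))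
      (∫ x in q.1..q.2, goursatSol a b w (x, q.2)) :=
    hasSum_integral_of_abs_le_summable (fun n => hKseg.continuousOn_left (hcont n) hqK) hv
      fun n x hx => hle n _ (hKseg q hqK x hx).1
  have hright : HasSum (fun n => ∫ y in q.1..q.2, (volterraOp a b)^[n] w (q.1, y))
      (∫ y in q.1..q.2, goursatSol a b w (q.1, y)) :=
    hasSum_integral_of_abs_le_summable (fun n => hKseg.continuousOn_right (hcont n) hqK) hv
      fun n y hy => hle n _ (hKseg q hqK y hy).2
  have hsum : HasSum (fun n => (volterraOp a b)^[n + 1] w q)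
      (volterraOp a b (goursatSol a b w) q) := by
    simpa only [Function.iterate_succ_apply'] using! (hleft.mul_left (a q)).add
      (hright.mul_left (b q))
  rw [← hsum.tsum_eq]
  exact (Summable.of_norm_bounded hv fun n => hle n q hqK).tsum_eq_zero_add

lemma IsSegmentClosed.goursatSol_nonneg (hD : IsSegmentClosed D) (ha : ∀ q ∈ D, 0 ≤ a q)
    (hb : ∀ q ∈ D, 0 ≤ b q) (hw : ∀ q ∈ D, 0 ≤ w q) {q : ℝ × ℝ} (hq : q ∈ D) (hle : q.1 ≤ q.2) :
    0 ≤ goursatSol a b w q := by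
  suffices h : ∀ n, ∀ q ∈ D, q.1 ≤ q.2 → 0 ≤ (volterraOp a b)^[n] w q from
    tsum_nonneg fun n => h n q hq hle
  intro n
  induction n with
  | zero => exact fun q hq _ => hw q hq
  | succ n ih =>
    intro q hq hle
    rw [Function.iterate_succ_apply']
    have hseg (z : ℝ) (hz : z ∈ Icc q.1 q.2) := hD q hq z (Icc_subset_uIcc hz)
    exact add_nonneg
      (mul_nonneg (ha q hq) (intervalIntegral.integral_nonneg hle fun x hx =>
        ih _ (hseg x hx).1 hx.2))
      (mul_nonneg (hb q hq) (intervalIntegral.integral_nonneg hle fun y hy =>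
        ih _ (hseg y hy).2 hy.1))

end Goursat

section Potential

variable {Ω : Set (ℝ × ℝ)} {f A B W : ℝ × ℝ → ℝ}

lemma hasDerivAt_integral_right_of_continuousOn {g : ℝ → ℝ} {U : Set ℝ} (hU : IsOpen U)
    (hg : ContinuousOn g U) {a b : ℝ} (hab : uIcc a b ⊆ U) :
    HasDerivAt (fun y => ∫ z in a..y, g z) (g b) b :=
  have hb : b ∈ U := hab right_mem_uIcc
  intervalIntegral.integral_hasDerivAt_right (hg.mono hab).intervalIntegrable
    (hg.stronglyMeasurableAtFilter hU b hb) (hg.continuousAt (hU.mem_nhds hb))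

lemma HasSegmentClosedNhds.hasDerivAt_integral_snd (hΩ : HasSegmentClosedNhds Ω)
    (hf : ContinuousOn f Ω) {q : ℝ × ℝ} (hq : q ∈ Ω) :
    HasDerivAt (fun y => ∫ z in q.1..y, f (q.1, z)) (f q) q.2 :=
  hasDerivAt_integral_right_of_continuousOn
    (hΩ.isOpen.preimage (by fun_prop : Continuous fun y : ℝ => (q.1, y)))
    (hf.comp (by fun_prop) fun _ hy => hy) fun z hz => (hΩ.isSegmentClosed q hq z hz).2

lemma HasSegmentClosedNhds.hasDerivAt_integral_fst (hΩ : HasSegmentClosedNhds Ω)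
    (hf : ContinuousOn f Ω) {q : ℝ × ℝ} (hq : q ∈ Ω) :
    HasDerivAt (fun x => ∫ z in x..q.2, f (z, q.2)) (-f q) q.1 := by
  refine HasDerivAt.congr_of_eventuallyEq ?_ (Eventually.of_forall fun x =>
    intervalIntegral.integral_symm q.2 x)
  refine (hasDerivAt_integral_right_of_continuousOn (g := fun z => f (z, q.2))
    (hΩ.isOpen.preimage (by fun_prop : Continuous fun x : ℝ => (x, q.2)))
    (hf.comp (by fun_prop) fun _ hx => hx) fun z hz => ?_).neg
  rw [uIcc_comm] at hz
  exact (hΩ.isSegmentClosed q hq z hz).1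

lemma exists_closedBall_prod_subset {K : Set ℝ} {x : ℝ} (hΩ : IsOpen Ω) (hK : IsCompact K)
    (hsub : ∀ y ∈ K, (x, y) ∈ Ω) : ∃ ρ > 0, Metric.closedBall x ρ ×ˢ K ⊆ Ω := by
  obtain ⟨U, V, hU, -, hxU, hKV, hUV⟩ := generalized_tube_lemma (s := {x}) isCompact_singleton hK
    hΩ (by rintro ⟨x', y⟩ ⟨rfl, hy⟩; exact hsub y hy)
  obtain ⟨ρ, hρ, hball⟩ := Metric.nhds_basis_closedBall.mem_iff.1 (hU.mem_nhds (hxU rfl))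
  exact ⟨ρ, hρ, (prod_mono hball hKV).trans hUV⟩

lemma hasDerivAt_integral_of_continuousOn_deriv (hΩ : IsOpen Ω) (hA : ContinuousOn A Ω)
    (hW : ContinuousOn W Ω) (hAW : ∀ q ∈ Ω, HasDerivAt (fun x => A (x, q.2)) (W q) q.1)
    {x₀ a b : ℝ} (hab : ∀ y ∈ uIcc a b, (x₀, y) ∈ Ω) :
    HasDerivAt (fun x => ∫ y in a..b, A (x, y)) (∫ y in a..b, W (x₀, y)) x₀ := by
  obtain ⟨ρ, hρ, hsub⟩ := exists_closedBall_prod_subset hΩ isCompact_uIcc hab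
  obtain ⟨C, hC⟩ := ((isCompact_closedBall x₀ ρ).prod isCompact_uIcc).exists_bound_of_continuousOn
    (hW.mono hsub)
  have hslice {g : ℝ × ℝ → ℝ} (hg : ContinuousOn g Ω) {x : ℝ} (hx : x ∈ Metric.closedBall x₀ ρ) :
      ContinuousOn (fun y => g (x, y)) (uIcc a b) :=
    hg.comp (by fun_prop) fun y hy => hsub ⟨hx, hy⟩
  have hmeas {g : ℝ × ℝ → ℝ} (hg : ContinuousOn g Ω) {x : ℝ} (hx : x ∈ Metric.closedBall x₀ ρ) :
      AEStronglyMeasurable (fun y => g (x, y)) (volume.restrict (uIoc a b)) :=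
    ((hslice hg hx).mono uIoc_subset_uIcc).aestronglyMeasurable measurableSet_uIoc
  have hball : Metric.closedBall x₀ ρ ∈ nhds x₀ := Metric.closedBall_mem_nhds _ hρ
  have hx₀ := mem_of_mem_nhds hball
  exact (intervalIntegral.hasDerivAt_integral_of_dominated_loc_of_deriv_le
    (F := fun x y => A (x, y)) (F' := fun x y => W (x, y)) (bound := fun _ => C) hball
    (by filter_upwards [hball] with x hx using hmeas hA hx)
    (hslice hA hx₀).intervalIntegrable (hmeas hW hx₀)
    (Eventually.of_forall fun y hy x hx => hC (x, y) ⟨hx, uIoc_subset_uIcc hy⟩)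
    intervalIntegrable_const
    (Eventually.of_forall fun y hy x hx => hAW (x, y) (hsub ⟨hx, uIoc_subset_uIcc hy⟩))).2

lemma eventually_uIcc_prod_subset (hΩ : IsOpen Ω) {x₀ : ℝ} (hx₀ : (x₀, x₀) ∈ Ω) :
    ∀ᶠ x in nhds x₀, ∀ y ∈ uIcc x₀ x, (x, y) ∈ Ω := by
  obtain ⟨ρ, hρ, hball⟩ := Metric.isOpen_iff.1 hΩ _ hx₀
  filter_upwards [Metric.ball_mem_nhds x₀ hρ] with x hx y hy
  refine hball ?_
  rw [← ball_prod_same]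
  refine ⟨hx, ?_⟩
  rw [Metric.mem_ball, Real.dist_eq] at *
  exact (abs_sub_left_of_mem_uIcc hy).trans_lt hx

lemma hasDerivAt_integral_diag (hΩ : IsOpen Ω) (hA : ContinuousOn A Ω) {x₀ : ℝ}
    (hx₀ : (x₀, x₀) ∈ Ω) : HasDerivAt (fun x => ∫ y in x₀..x, A (x, y)) (A (x₀, x₀)) x₀ := by
  rw [hasDerivAt_iff_isLittleO, Asymptotics.isLittleO_iff]
  intro ε hε
  obtain ⟨δ, hδ, hclose⟩ := Metric.continuousAt_iff.1 (hA.continuousAt (hΩ.mem_nhds hx₀)) ε hε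
  filter_upwards [eventually_uIcc_prod_subset hΩ hx₀, Metric.ball_mem_nhds x₀ hδ] with x hx hxδ
  have hint : IntervalIntegrable (fun y => A (x, y)) volume x₀ x :=
    ContinuousOn.intervalIntegrable (hA.comp (by fun_prop) hx)
  have hrem : (∫ y in x₀..x, A (x, y)) - (∫ y in x₀..x₀, A (x₀, y)) - (x - x₀) • A (x₀, x₀)
      = ∫ y in x₀..x, (A (x, y) - A (x₀, x₀)) := by
    rw [intervalIntegral.integral_sub hint intervalIntegrable_const]
    simp
  rw [hrem]
  refine intervalIntegral.norm_integral_le_of_norm_le_const fun y hy => ?_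
  have hy' : dist y x₀ < δ := by
    rw [Metric.mem_ball, Real.dist_eq] at *
    exact (abs_sub_left_of_mem_uIcc (uIoc_subset_uIcc hy)).trans_lt hxδ
  rw [← dist_eq_norm]
  exact (hclose (by rw [Prod.dist_eq]; exact max_lt hxδ hy')).le

lemma HasSegmentClosedNhds.hasDerivAt_potential_fst (hΩ : HasSegmentClosedNhds Ω)
    (hA : ContinuousOn A Ω) (hW : ContinuousOn W Ω)
    (hAW : ∀ q ∈ Ω, HasDerivAt (fun x => A (x, q.2)) (W q) q.1)
    (hBW : ∀ q ∈ Ω, HasDerivAt (fun y => B (q.1, y)) (W q) q.2) {g : ℝ → ℝ} {q : ℝ × ℝ}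
    (hq : q ∈ Ω) (hg : HasDerivAt g (A (q.1, q.1) + B (q.1, q.1)) q.1) :
    HasDerivAt (fun x => g x + ∫ y in x..q.2, A (x, y)) (B q) q.1 := by
  have hseg (y : ℝ) (hy : y ∈ uIcc q.1 q.2) : (q.1, y) ∈ Ω := (hΩ.isSegmentClosed q hq y hy).2
  have hWB : ∫ y in q.1..q.2, W (q.1, y) = B q - B (q.1, q.1) :=
    intervalIntegral.integral_eq_sub_of_hasDerivAt (f := fun y => B (q.1, y))
      (fun y hy => hBW (q.1, y) (hseg y hy))
      (hΩ.isSegmentClosed.continuousOn_right hW hq).intervalIntegrable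
  have hparam := hasDerivAt_integral_of_continuousOn_deriv hΩ.isOpen hA hW hAW hseg
  have hdiag := hasDerivAt_integral_diag hΩ.isOpen hA (hseg q.1 left_mem_uIcc)
  refine ((hg.add (hparam.sub hdiag)).congr_deriv (by rw [hWB]; ring)).congr_of_eventuallyEq ?_
  obtain ⟨ρ, hρ, hsub⟩ := exists_closedBall_prod_subset hΩ.isOpen isCompact_uIcc hseg
  filter_upwards [eventually_uIcc_prod_subset hΩ.isOpen (hseg q.1 left_mem_uIcc),
    Metric.closedBall_mem_nhds q.1 hρ] with x hx hxρ
  have hint {z : ℝ} (hz : ∀ y ∈ uIcc q.1 z, (x, y) ∈ Ω) :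
      IntervalIntegrable (fun y => A (x, y)) volume q.1 z :=
    ContinuousOn.intervalIntegrable (hA.comp (by fun_prop) hz)
  exact congrArg (g x + ·) (intervalIntegral.integral_interval_sub_left
    (hint fun y hy => hsub ⟨hxρ, hy⟩) (hint hx)).symm

lemma hasStrictFDerivAt_of_continuousOn_partials {Y : ℝ × ℝ → ℝ} (hΩ : IsOpen Ω)
    (hA : ContinuousOn A Ω) (hB : ContinuousOn B Ω)
    (hYB : ∀ q ∈ Ω, HasDerivAt (fun x => Y (x, q.2)) (B q) q.1)
    (hYA : ∀ q ∈ Ω, HasDerivAt (fun y => Y (q.1, y)) (A q) q.2) {q : ℝ × ℝ} (hq : q ∈ Ω) :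
    HasStrictFDerivAt Y
      (B q • ContinuousLinearMap.fst ℝ ℝ ℝ + A q • ContinuousLinearMap.snd ℝ ℝ ℝ) q := by
  have hnhds := hΩ.mem_nhds hq
  have hspan {g : ℝ × ℝ → ℝ} (hg : ContinuousOn g Ω) :
      ContinuousAt (fun z => ContinuousLinearMap.toSpanSingleton ℝ (g z)) q :=
    (ContinuousLinearMap.toSpanSingletonCLE (𝕜 := ℝ) (E := ℝ)).continuous.continuousAt.comp
      (hg.continuousAt hnhds)
  refine (hasStrictFDerivAt_uncurry_coprod (f := fun x y => Y (x, y))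
    (f₁ := fun x y => ContinuousLinearMap.toSpanSingleton ℝ (B (x, y)))
    (f₂ := fun x y => ContinuousLinearMap.toSpanSingleton ℝ (A (x, y)))
    (by filter_upwards [hnhds] with z hz using (hYB z hz).hasFDerivAt)
    (by filter_upwards [hnhds] with z hz using (hYA z hz).hasFDerivAt)
    (hspan hB) (hspan hA)).congr_fderiv ?_
  ext <;> simp [Function.HasUncurry.uncurry]

/-- The Poincaré lemma for the closed form `B dx + A dy`, integrated from the diagonal. -/
lemma HasSegmentClosedNhds.hasStrictFDerivAt_potential (hΩ : HasSegmentClosedNhds Ω)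
    (hA : ContinuousOn A Ω) (hB : ContinuousOn B Ω) (hW : ContinuousOn W Ω)
    (hAW : ∀ q ∈ Ω, HasDerivAt (fun x => A (x, q.2)) (W q) q.1)
    (hBW : ∀ q ∈ Ω, HasDerivAt (fun y => B (q.1, y)) (W q) q.2) {g : ℝ → ℝ}
    (hg : ∀ x, HasDerivAt g (A (x, x) + B (x, x)) x) {q : ℝ × ℝ} (hq : q ∈ Ω) :
    HasStrictFDerivAt (fun q : ℝ × ℝ => g q.1 + ∫ y in q.1..q.2, A (q.1, y))
      (B q • ContinuousLinearMap.fst ℝ ℝ ℝ + A q • ContinuousLinearMap.snd ℝ ℝ ℝ) q :=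
  hasStrictFDerivAt_of_continuousOn_partials hΩ.isOpen hA hB
    (fun q hq => hΩ.hasDerivAt_potential_fst hA hW hAW hBW hq (hg q.1))
    (fun q hq => (hΩ.hasDerivAt_integral_snd hA hq).const_add (g q.1)) hq

end Potential

section Hodograph

/-- Data of a rarefactive Cauchy problem in Riemann coordinates: a wave speed `C`, given as a
function of `Z = (s - r) / 2` on the range `R` of `Z`, and nondecreasing initial Riemann invariants
`s`, `r` with slopes at most `B` whose values of `Z` stay away from the lower end of `R`. -/
structure IsHodographData (R : Set ℝ) (C s r : ℝ → ℝ) (B : ℝ) : Prop where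
  isOpen : IsOpen R
  isUpperSet : IsUpperSet R
  contDiffOn_speed : ContDiffOn ℝ 1 C R
  speed_pos : ∀ Z ∈ R, 0 < C Z
  deriv_speed_nonneg : ∀ Z ∈ R, 0 ≤ deriv C Z
  contDiff_s : ContDiff ℝ 1 s
  contDiff_r : ContDiff ℝ 1 r
  deriv_s_nonneg : ∀ x, 0 ≤ deriv s x
  deriv_r_nonneg : ∀ x, 0 ≤ deriv r x
  bound_pos : 0 < B
  deriv_s_le : ∀ x, deriv s x ≤ B
  deriv_r_le : ∀ x, deriv r x ≤ B
  exists_le_diag : ∃ m ∈ R, ∀ x, m ≤ (s x - r x) / 2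

/-- The value of `Z = (s - r) / 2` where the `s`-characteristic issued from `q.1` meets the
`r`-characteristic issued from `q.2`. -/
noncomputable def riemannDiff (s r : ℝ → ℝ) (q : ℝ × ℝ) : ℝ := (s q.1 - r q.2) / 2

/-- The pairs of characteristic feet at which the specific volume is defined. -/
def hodographDomain (R : Set ℝ) (s r : ℝ → ℝ) : Set (ℝ × ℝ) := {q | riemannDiff s r q ∈ R}

/-- The value on the diagonal of `T_y - r_y / (4 B C)`, respectively `-T_x - s_x / (4 B C)`, for
`g = r`, respectively `g = s`; see `hodographP`. -/
noncomputable def diagDensity (C s r : ℝ → ℝ) (B : ℝ) (g : ℝ → ℝ) (x : ℝ) : ℝ :=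
  (1 - deriv g x / (2 * B)) / (2 * C (riemannDiff s r (x, x)))

/-- The coefficient `C' / (4 C)` of the Goursat problem. -/
noncomputable def hodographCoeff (C s r : ℝ → ℝ) (q : ℝ × ℝ) : ℝ :=
  deriv C (riemannDiff s r q) / (4 * C (riemannDiff s r q))

/-- The mixed derivative `V = -T_xy` up to an explicit nonnegative term. Subtracting that term is
what makes the sharp lower bound `T_y ≥ r_y / (4 B C)` a consequence of `V ≥ 0`. -/
noncomputable def hodographV (C s r : ℝ → ℝ) (B : ℝ) : ℝ × ℝ → ℝ :=
  goursatSol (fun q => hodographCoeff C s r q * deriv s q.1)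
    (fun q => hodographCoeff C s r q * deriv r q.2)
    (fun q => hodographCoeff C s r q *
      (deriv s q.1 * diagDensity C s r B r q.2 + deriv r q.2 * diagDensity C s r B s q.1))

/-- The derivative `T_y` of the time `T(x, y)` at which the `s`-characteristic from `x` meets the
`r`-characteristic from `y`. -/
noncomputable def hodographP (C s r : ℝ → ℝ) (B : ℝ) (q : ℝ × ℝ) : ℝ :=
  diagDensity C s r B r q.2 + (∫ x in q.1..q.2, hodographV C s r B (x, q.2)) +
    deriv r q.2 / (4 * B * C (riemannDiff s r q))

/-- The derivative `-T_x` of the meeting time `T(x, y)`. -/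
noncomputable def hodographQ (C s r : ℝ → ℝ) (B : ℝ) (q : ℝ × ℝ) : ℝ :=
  diagDensity C s r B s q.1 + (∫ y in q.1..q.2, hodographV C s r B (q.1, y)) +
    deriv s q.1 / (4 * B * C (riemannDiff s r q))

/-- The mixed derivative `-T_xy`. -/
noncomputable def hodographW (C s r : ℝ → ℝ) (B : ℝ) (q : ℝ × ℝ) : ℝ :=
  hodographV C s r B q + deriv C (riemannDiff s r q) * deriv s q.1 * deriv r q.2 /
    (8 * B * C (riemannDiff s r q) ^ 2)

/-- `(X, T)(x, y)` is the point where the `s`-characteristic from `(x, 0)` meets the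
`r`-characteristic from `(y, 0)`; these travel with speeds `C` and `-C`, so that `X_y = C T_y` and
`X_x = -C T_x`. The derivatives `P = T_y` and `Q = -T_x` are positive above the diagonal. -/
structure IsHodographMap (R : Set ℝ) (C s r : ℝ → ℝ) (B : ℝ) (X T P Q : ℝ × ℝ → ℝ) : Prop where
  continuousOn_P : ContinuousOn P (hodographDomain R s r)
  continuousOn_Q : ContinuousOn Q (hodographDomain R s r)
  hasStrictFDerivAt_X : ∀ q ∈ hodographDomain R s r, HasStrictFDerivAt X
    ((C (riemannDiff s r q) * Q q) • ContinuousLinearMap.fst ℝ ℝ ℝ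
      + (C (riemannDiff s r q) * P q) • ContinuousLinearMap.snd ℝ ℝ ℝ) q
  hasStrictFDerivAt_T : ∀ q ∈ hodographDomain R s r, HasStrictFDerivAt T
    (-Q q • ContinuousLinearMap.fst ℝ ℝ ℝ + P q • ContinuousLinearMap.snd ℝ ℝ ℝ) q
  X_diag : ∀ x, X (x, x) = x
  T_diag : ∀ x, T (x, x) = 0
  P_pos : ∀ q ∈ hodographDomain R s r, q.1 ≤ q.2 → 0 < P q
  Q_pos : ∀ q ∈ hodographDomain R s r, q.1 ≤ q.2 → 0 < Q q
  le_P : ∀ q ∈ hodographDomain R s r, q.1 ≤ q.2 →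
    deriv r q.2 / (4 * B * C (riemannDiff s r q)) ≤ P q

namespace IsHodographData

variable {R : Set ℝ} {C s r : ℝ → ℝ} {B : ℝ} {q : ℝ × ℝ}

lemma monotone_s (h : IsHodographData R C s r B) : Monotone s :=
  monotone_of_deriv_nonneg (h.contDiff_s.differentiable one_ne_zero) h.deriv_s_nonneg

lemma monotone_r (h : IsHodographData R C s r B) : Monotone r :=
  monotone_of_deriv_nonneg (h.contDiff_r.differentiable one_ne_zero) h.deriv_r_nonneg

lemma riemannDiff_le (h : IsHodographData R C s r B) {x x' y y' : ℝ} (hx : x ≤ x')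
    (hy : y' ≤ y) : riemannDiff s r (x, y) ≤ riemannDiff s r (x', y') := by
  have hs := h.monotone_s hx
  have hr := h.monotone_r hy
  unfold riemannDiff
  linarith

@[fun_prop]
lemma continuous_riemannDiff (h : IsHodographData R C s r B) : Continuous (riemannDiff s r) := by
  have hs := h.contDiff_s.continuous
  have hr := h.contDiff_r.continuous
  unfold riemannDiff
  fun_prop

lemma isOpen_hodographDomain (h : IsHodographData R C s r B) : IsOpen (hodographDomain R s r) :=
  h.isOpen.preimage h.continuous_riemannDiff

lemma diag_mem (h : IsHodographData R C s r B) (x : ℝ) : (x, x) ∈ hodographDomain R s r :=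
  let ⟨_, hm, hle⟩ := h.exists_le_diag
  h.isUpperSet (hle x) hm

lemma isSegmentClosed_le_riemannDiff (h : IsHodographData R C s r B) {m : ℝ}
    (hm : ∀ x, m ≤ riemannDiff s r (x, x)) : IsSegmentClosed {q | m ≤ riemannDiff s r q} := by
  intro q hq z hz
  rcases mem_uIcc.1 hz with ⟨h₁, h₂⟩ | ⟨h₁, h₂⟩
  · exact ⟨le_trans hq (h.riemannDiff_le h₁ le_rfl),
      le_trans hq (h.riemannDiff_le le_rfl h₂)⟩
  · exact ⟨(hm q.2).trans (h.riemannDiff_le h₁ le_rfl),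
      (hm q.1).trans (h.riemannDiff_le le_rfl h₂)⟩

lemma hasSegmentClosedNhds (h : IsHodographData R C s r B) :
    HasSegmentClosedNhds (hodographDomain R s r) := by
  intro q hq
  obtain ⟨m₀, hm₀, hle⟩ := h.exists_le_diag
  obtain ⟨m₁, hm₁, hlt⟩ : ∃ m₁ ∈ R, m₁ < riemannDiff s r q :=
    (((h.isOpen.eventually_mem hq).filter_mono nhdsWithin_le_nhds).and
      (self_mem_nhdsWithin (s := Iio (riemannDiff s r q)))).exists
  have hmem : min m₀ m₁ ∈ R := by rcases min_choice m₀ m₁ with hmin | hmin <;> rwa [hmin]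
  refine ⟨Metric.closedBall 0 (‖q‖ + 1) ∩ {z | min m₀ m₁ ≤ riemannDiff s r z}, ?_, ?_, ?_, ?_⟩
  · refine inter_mem (mem_of_superset (Metric.isOpen_ball.mem_nhds ?_)
      Metric.ball_subset_closedBall) (mem_of_superset
        (h.continuous_riemannDiff.continuousAt.preimage_mem_nhds (Ioi_mem_nhds hlt))
        fun z hz => (min_le_right m₀ m₁).trans (le_of_lt hz))
    rw [mem_ball_zero_iff]
    exact lt_add_one _
  · exact (isCompact_closedBall _ _).inter_right
      (isClosed_le continuous_const h.continuous_riemannDiff)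
  · exact (isSegmentClosed_closedBall_zero _).inter
      (h.isSegmentClosed_le_riemannDiff fun x => (min_le_left _ _).trans (hle x))
  · exact fun z hz => h.isUpperSet hz.2 hmem

lemma hasDerivAt_riemannDiff_fst (h : IsHodographData R C s r B) (q : ℝ × ℝ) :
    HasDerivAt (fun x => riemannDiff s r (x, q.2)) (deriv s q.1 / 2) q.1 :=
  ((h.contDiff_s.differentiable one_ne_zero q.1).hasDerivAt.sub_const (r q.2)).div_const 2

lemma hasDerivAt_riemannDiff_snd (h : IsHodographData R C s r B) (q : ℝ × ℝ) :
    HasDerivAt (fun y => riemannDiff s r (q.1, y)) (-deriv r q.2 / 2) q.2 :=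
  ((h.contDiff_r.differentiable one_ne_zero q.2).hasDerivAt.const_sub (s q.1)).div_const 2

lemma hasDerivAt_speed (h : IsHodographData R C s r B) {Z : ℝ} (hZ : Z ∈ R) :
    HasDerivAt C (deriv C Z) Z :=
  ((h.contDiffOn_speed.contDiffAt (h.isOpen.mem_nhds hZ)).differentiableAt one_ne_zero).hasDerivAt

lemma hasDerivAt_speed_fst (h : IsHodographData R C s r B) (hq : q ∈ hodographDomain R s r) :
    HasDerivAt (fun x => C (riemannDiff s r (x, q.2)))
      (deriv C (riemannDiff s r q) * (deriv s q.1 / 2)) q.1 :=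
  HasDerivAt.comp (h := fun x => riemannDiff s r (x, q.2)) q.1 (h.hasDerivAt_speed hq)
    (h.hasDerivAt_riemannDiff_fst q)

lemma hasDerivAt_speed_snd (h : IsHodographData R C s r B) (hq : q ∈ hodographDomain R s r) :
    HasDerivAt (fun y => C (riemannDiff s r (q.1, y)))
      (deriv C (riemannDiff s r q) * (-deriv r q.2 / 2)) q.2 :=
  HasDerivAt.comp (h := fun y => riemannDiff s r (q.1, y)) q.2 (h.hasDerivAt_speed hq)
    (h.hasDerivAt_riemannDiff_snd q)

lemma continuous_deriv_s (h : IsHodographData R C s r B) : Continuous (deriv s) :=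
  h.contDiff_s.continuous_deriv le_rfl

lemma continuous_deriv_r (h : IsHodographData R C s r B) : Continuous (deriv r) :=
  h.contDiff_r.continuous_deriv le_rfl

lemma continuousOn_speed (h : IsHodographData R C s r B) :
    ContinuousOn (fun q => C (riemannDiff s r q)) (hodographDomain R s r) :=
  h.contDiffOn_speed.continuousOn.comp h.continuous_riemannDiff.continuousOn fun _ hq => hq

lemma continuousOn_deriv_speed (h : IsHodographData R C s r B) :
    ContinuousOn (fun q => deriv C (riemannDiff s r q)) (hodographDomain R s r) :=
  (h.contDiffOn_speed.continuousOn_deriv_of_isOpen h.isOpen le_rfl).comp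
    h.continuous_riemannDiff.continuousOn fun _ hq => hq

lemma speed_ne_zero (h : IsHodographData R C s r B) (hq : q ∈ hodographDomain R s r) :
    C (riemannDiff s r q) ≠ 0 := (h.speed_pos _ hq).ne'

lemma continuous_diagDensity (h : IsHodographData R C s r B) {g : ℝ → ℝ}
    (hg : Continuous (deriv g)) : Continuous (diagDensity C s r B g) := by
  have hC : Continuous fun x => C (riemannDiff s r (x, x)) :=
    h.continuousOn_speed.comp_continuous (by fun_prop : Continuous fun x : ℝ => (x, x)) h.diag_mem
  exact Continuous.div (by fun_prop) (continuous_const.mul hC)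
    fun x => mul_ne_zero two_ne_zero (h.speed_ne_zero (h.diag_mem x))

lemma diagDensity_pos (h : IsHodographData R C s r B) {g : ℝ → ℝ} {x : ℝ} (hg : deriv g x ≤ B) :
    0 < diagDensity C s r B g x := by
  have hB := h.bound_pos
  refine div_pos ?_ (mul_pos two_pos (h.speed_pos _ (h.diag_mem x)))
  rw [sub_pos, div_lt_one (by positivity)]
  linarith

lemma continuousOn_hodographCoeff (h : IsHodographData R C s r B) :
    ContinuousOn (hodographCoeff C s r) (hodographDomain R s r) :=
  h.continuousOn_deriv_speed.div (continuousOn_const.mul h.continuousOn_speed)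
    fun _ hq => mul_ne_zero four_ne_zero (h.speed_ne_zero hq)

lemma hodographCoeff_nonneg (h : IsHodographData R C s r B) (hq : q ∈ hodographDomain R s r) :
    0 ≤ hodographCoeff C s r q :=
  div_nonneg (h.deriv_speed_nonneg _ hq) (mul_pos four_pos (h.speed_pos _ hq)).le

lemma continuousOn_coeff_mul_deriv_s (h : IsHodographData R C s r B) :
    ContinuousOn (fun q => hodographCoeff C s r q * deriv s q.1) (hodographDomain R s r) :=
  h.continuousOn_hodographCoeff.mul (h.continuous_deriv_s.comp continuous_fst).continuousOn

lemma continuousOn_coeff_mul_deriv_r (h : IsHodographData R C s r B) :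
    ContinuousOn (fun q => hodographCoeff C s r q * deriv r q.2) (hodographDomain R s r) :=
  h.continuousOn_hodographCoeff.mul (h.continuous_deriv_r.comp continuous_snd).continuousOn

lemma continuousOn_goursat_source (h : IsHodographData R C s r B) :
    ContinuousOn (fun q : ℝ × ℝ => hodographCoeff C s r q *
      (deriv s q.1 * diagDensity C s r B r q.2 + deriv r q.2 * diagDensity C s r B s q.1))
      (hodographDomain R s r) := by
  have hs := h.continuous_deriv_s
  have hr := h.continuous_deriv_r
  have hgs := h.continuous_diagDensity hs
  have hgr := h.continuous_diagDensity hr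
  exact h.continuousOn_hodographCoeff.mul (Continuous.continuousOn (by fun_prop))

lemma continuousOn_hodographV (h : IsHodographData R C s r B) :
    ContinuousOn (hodographV C s r B) (hodographDomain R s r) :=
  h.hasSegmentClosedNhds.continuousOn_goursatSol h.continuousOn_coeff_mul_deriv_s
    h.continuousOn_coeff_mul_deriv_r h.continuousOn_goursat_source

lemma hodographV_nonneg (h : IsHodographData R C s r B) (hq : q ∈ hodographDomain R s r)
    (hle : q.1 ≤ q.2) : 0 ≤ hodographV C s r B q := by
  refine h.hasSegmentClosedNhds.isSegmentClosed.goursatSol_nonneg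
    (fun q hq => mul_nonneg (h.hodographCoeff_nonneg hq) (h.deriv_s_nonneg _))
    (fun q hq => mul_nonneg (h.hodographCoeff_nonneg hq) (h.deriv_r_nonneg _))
    (fun q hq => mul_nonneg (h.hodographCoeff_nonneg hq) (add_nonneg ?_ ?_)) hq hle
  · exact mul_nonneg (h.deriv_s_nonneg _) (h.diagDensity_pos (h.deriv_r_le _)).le
  · exact mul_nonneg (h.deriv_r_nonneg _) (h.diagDensity_pos (h.deriv_s_le _)).le

lemma continuousOn_hodographP (h : IsHodographData R C s r B) :
    ContinuousOn (hodographP C s r B) (hodographDomain R s r) :=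
  (((h.continuous_diagDensity h.continuous_deriv_r).comp continuous_snd).continuousOn.add
    (h.hasSegmentClosedNhds.continuousOn_integral_left h.continuousOn_hodographV)).add
    ((h.continuous_deriv_r.comp continuous_snd).continuousOn.div
      (continuousOn_const.mul h.continuousOn_speed) fun _ hq =>
      mul_ne_zero (mul_pos four_pos h.bound_pos).ne' (h.speed_ne_zero hq))

lemma continuousOn_hodographQ (h : IsHodographData R C s r B) :
    ContinuousOn (hodographQ C s r B) (hodographDomain R s r) :=
  (((h.continuous_diagDensity h.continuous_deriv_s).comp continuous_fst).continuousOn.add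
    (h.hasSegmentClosedNhds.continuousOn_integral_right h.continuousOn_hodographV)).add
    ((h.continuous_deriv_s.comp continuous_fst).continuousOn.div
      (continuousOn_const.mul h.continuousOn_speed) fun _ hq =>
      mul_ne_zero (mul_pos four_pos h.bound_pos).ne' (h.speed_ne_zero hq))

lemma continuousOn_hodographW (h : IsHodographData R C s r B) :
    ContinuousOn (hodographW C s r B) (hodographDomain R s r) :=
  h.continuousOn_hodographV.add (((h.continuousOn_deriv_speed.mul
    (h.continuous_deriv_s.comp continuous_fst).continuousOn).mul
    (h.continuous_deriv_r.comp continuous_snd).continuousOn).div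
    (continuousOn_const.mul (h.continuousOn_speed.pow 2)) fun _ hq =>
      mul_ne_zero (mul_pos (by norm_num) h.bound_pos).ne' (pow_ne_zero 2 (h.speed_ne_zero hq)))

lemma hodographW_eq (h : IsHodographData R C s r B) (hq : q ∈ hodographDomain R s r) :
    hodographW C s r B q = hodographCoeff C s r q *
      (deriv s q.1 * hodographP C s r B q + deriv r q.2 * hodographQ C s r B q) := by
  have hV := h.hasSegmentClosedNhds.goursatSol_eq h.continuousOn_coeff_mul_deriv_s
    h.continuousOn_coeff_mul_deriv_r h.continuousOn_goursat_source hq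
  change hodographV C s r B q = _ + volterraOp _ _ (hodographV C s r B) q at hV
  have hC := h.speed_ne_zero hq
  have hB := h.bound_pos.ne'
  rw [hodographW, hV]
  simp only [volterraOp, hodographP, hodographQ, hodographCoeff]
  field_simp
  ring

lemma hasDerivAt_hodographP (h : IsHodographData R C s r B) (hq : q ∈ hodographDomain R s r) :
    HasDerivAt (fun x => hodographP C s r B (x, q.2)) (-hodographW C s r B q) q.1 := by
  have hC := h.speed_ne_zero hq
  have hB := h.bound_pos.ne'
  have hint := (h.hasSegmentClosedNhds.hasDerivAt_integral_fst h.continuousOn_hodographV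
    hq).const_add (diagDensity C s r B r q.2)
  have hquot := (hasDerivAt_const q.1 (deriv r q.2)).div
    ((h.hasDerivAt_speed_fst hq).const_mul (4 * B)) (by simp [hB, hC])
  refine (hint.add hquot).congr_deriv ?_
  rw [hodographW]
  field_simp
  ring

lemma hasDerivAt_hodographQ (h : IsHodographData R C s r B) (hq : q ∈ hodographDomain R s r) :
    HasDerivAt (fun y => hodographQ C s r B (q.1, y)) (hodographW C s r B q) q.2 := by
  have hC := h.speed_ne_zero hq
  have hB := h.bound_pos.ne'
  have hint := (h.hasSegmentClosedNhds.hasDerivAt_integral_snd h.continuousOn_hodographV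
    hq).const_add (diagDensity C s r B s q.1)
  have hquot := (hasDerivAt_const q.2 (deriv s q.1)).div
    ((h.hasDerivAt_speed_snd hq).const_mul (4 * B)) (by simp [hB, hC])
  refine (hint.add hquot).congr_deriv ?_
  rw [hodographW]
  field_simp
  ring

lemma hodographP_diag (h : IsHodographData R C s r B) (x : ℝ) :
    hodographP C s r B (x, x) = 1 / (2 * C (riemannDiff s r (x, x))) := by
  have hC := h.speed_ne_zero (h.diag_mem x)
  have hB := h.bound_pos.ne'
  simp only [hodographP, diagDensity, intervalIntegral.integral_same]
  field_simp
  ring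

lemma hodographQ_diag (h : IsHodographData R C s r B) (x : ℝ) :
    hodographQ C s r B (x, x) = 1 / (2 * C (riemannDiff s r (x, x))) := by
  have hC := h.speed_ne_zero (h.diag_mem x)
  have hB := h.bound_pos.ne'
  simp only [hodographQ, diagDensity, intervalIntegral.integral_same]
  field_simp
  ring

lemma lt_hodographP (h : IsHodographData R C s r B) (hq : q ∈ hodographDomain R s r)
    (hle : q.1 ≤ q.2) :
    deriv r q.2 / (4 * B * C (riemannDiff s r q)) < hodographP C s r B q := by
  have hint : 0 ≤ ∫ x in q.1..q.2, hodographV C s r B (x, q.2) :=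
    intervalIntegral.integral_nonneg hle fun x hx => h.hodographV_nonneg
      (h.hasSegmentClosedNhds.isSegmentClosed q hq x (Icc_subset_uIcc hx)).1 hx.2
  exact lt_add_of_pos_left _ (add_pos_of_pos_of_nonneg (h.diagDensity_pos (h.deriv_r_le _)) hint)

lemma lt_hodographQ (h : IsHodographData R C s r B) (hq : q ∈ hodographDomain R s r)
    (hle : q.1 ≤ q.2) :
    deriv s q.1 / (4 * B * C (riemannDiff s r q)) < hodographQ C s r B q := by
  have hint : 0 ≤ ∫ y in q.1..q.2, hodographV C s r B (q.1, y) :=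
    intervalIntegral.integral_nonneg hle fun y hy => h.hodographV_nonneg
      (h.hasSegmentClosedNhds.isSegmentClosed q hq y (Icc_subset_uIcc hy)).2 hy.1
  exact lt_add_of_pos_left _ (add_pos_of_pos_of_nonneg (h.diagDensity_pos (h.deriv_s_le _)) hint)

lemma hasStrictFDerivAt_time (h : IsHodographData R C s r B) (hq : q ∈ hodographDomain R s r) :
    HasStrictFDerivAt (fun q : ℝ × ℝ => 0 + ∫ y in q.1..q.2, hodographP C s r B (q.1, y))
      (-hodographQ C s r B q • ContinuousLinearMap.fst ℝ ℝ ℝ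
        + hodographP C s r B q • ContinuousLinearMap.snd ℝ ℝ ℝ) q :=
  h.hasSegmentClosedNhds.hasStrictFDerivAt_potential (B := fun q => -hodographQ C s r B q)
    (W := fun q => -hodographW C s r B q) h.continuousOn_hodographP h.continuousOn_hodographQ.neg
    h.continuousOn_hodographW.neg (fun _ hq => h.hasDerivAt_hodographP hq)
    (fun _ hq => (h.hasDerivAt_hodographQ hq).neg) (g := fun _ => 0)
    (fun x => (hasDerivAt_const x (0 : ℝ)).congr_deriv (by
      rw [h.hodographP_diag, h.hodographQ_diag, add_neg_cancel])) hq

lemma hasStrictFDerivAt_position (h : IsHodographData R C s r B)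
    (hq : q ∈ hodographDomain R s r) :
    HasStrictFDerivAt (fun q : ℝ × ℝ => q.1 + ∫ y in q.1..q.2,
        C (riemannDiff s r (q.1, y)) * hodographP C s r B (q.1, y))
      ((C (riemannDiff s r q) * hodographQ C s r B q) • ContinuousLinearMap.fst ℝ ℝ ℝ
        + (C (riemannDiff s r q) * hodographP C s r B q) • ContinuousLinearMap.snd ℝ ℝ ℝ) q := by
  refine h.hasSegmentClosedNhds.hasStrictFDerivAt_potential
    (A := fun q => C (riemannDiff s r q) * hodographP C s r B q)
    (B := fun q => C (riemannDiff s r q) * hodographQ C s r B q)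
    (W := fun q => deriv C (riemannDiff s r q) * (deriv s q.1 / 2) * hodographP C s r B q +
      C (riemannDiff s r q) * -hodographW C s r B q) (g := fun x => x)
    (h.continuousOn_speed.mul h.continuousOn_hodographP)
    (h.continuousOn_speed.mul h.continuousOn_hodographQ) ?_
    (fun q hq => (h.hasDerivAt_speed_fst hq).mul (h.hasDerivAt_hodographP hq))
    (fun q hq => ?_) (fun x => ?_) hq
  · exact ((h.continuousOn_deriv_speed.mul
      ((h.continuous_deriv_s.comp continuous_fst).div_const 2).continuousOn).mul
      h.continuousOn_hodographP).add (h.continuousOn_speed.mul h.continuousOn_hodographW.neg)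
  · refine ((h.hasDerivAt_speed_snd hq).mul (h.hasDerivAt_hodographQ hq)).congr_deriv ?_
    have hC := h.speed_ne_zero hq
    rw [h.hodographW_eq hq, hodographCoeff]
    field_simp
    ring
  · refine (hasDerivAt_id' x).congr_deriv ?_
    have hC := h.speed_ne_zero (h.diag_mem x)
    rw [h.hodographP_diag, h.hodographQ_diag]
    field_simp
    norm_num

theorem exists_isHodographMap (h : IsHodographData R C s r B) :
    ∃ X T P Q, IsHodographMap R C s r B X T P Q := by
  have hquot {g : ℝ → ℝ} {x : ℝ} (hg : 0 ≤ deriv g x) {q : ℝ × ℝ} (hq : q ∈ hodographDomain R s r) :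
      0 ≤ deriv g x / (4 * B * C (riemannDiff s r q)) :=
    div_nonneg hg (mul_pos (mul_pos four_pos h.bound_pos) (h.speed_pos _ hq)).le
  exact ⟨_, _, hodographP C s r B, hodographQ C s r B,
    { continuousOn_P := h.continuousOn_hodographP
      continuousOn_Q := h.continuousOn_hodographQ
      hasStrictFDerivAt_X := fun _ => h.hasStrictFDerivAt_position
      hasStrictFDerivAt_T := fun _ => h.hasStrictFDerivAt_time
      X_diag := fun x => by simp
      T_diag := fun x => by simp
      P_pos := fun q hq hle => (hquot (h.deriv_r_nonneg _) hq).trans_lt (h.lt_hodographP hq hle)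
      Q_pos := fun q hq hle => (hquot (h.deriv_s_nonneg _) hq).trans_lt (h.lt_hodographQ hq hle)
      le_P := fun q hq hle => (h.lt_hodographP hq hle).le }⟩

end IsHodographData

end Hodograph

section HodographRegion

/-- The part of the hodograph domain above the diagonal, which corresponds to times `t ≥ 0`. -/
def hodographRegion (R : Set ℝ) (s r : ℝ → ℝ) : Set (ℝ × ℝ) :=
  {q | q ∈ hodographDomain R s r ∧ q.1 ≤ q.2}

/-- The specific volume as a function `Φ` of `Z = (s - r) / 2`: it satisfies `Φ' = -1 / C`, and it
is bounded only where `Z` stays away from the lower end of `R`, the vacuum. -/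
structure IsVolumeFunction (R : Set ℝ) (C Φ : ℝ → ℝ) : Prop where
  hasDerivAt : ∀ Z ∈ R, HasDerivAt Φ (-(1 / C Z)) Z
  exists_le_of_le : ∀ N, ∃ m ∈ R, ∀ Z ∈ R, Φ Z ≤ N → m ≤ Z

variable {R : Set ℝ} {C s r Φ : ℝ → ℝ} {B : ℝ} {X T P Q : ℝ × ℝ → ℝ} {q : ℝ × ℝ}

lemma IsHodographData.mem_region (h : IsHodographData R C s r B) (hq : q ∈ hodographRegion R s r)
    {x y : ℝ} (hx : q.1 ≤ x) (hxy : x ≤ y) (hy : y ≤ q.2) : (x, y) ∈ hodographRegion R s r :=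
  ⟨h.isUpperSet (h.riemannDiff_le hx hy) hq.1, hxy⟩

lemma IsHodographData.mem_region_fst (h : IsHodographData R C s r B)
    (hq : q ∈ hodographRegion R s r) {x : ℝ} (hx : x ∈ Icc q.1 q.2) :
    (x, q.2) ∈ hodographRegion R s r := h.mem_region hq hx.1 hx.2 le_rfl

lemma IsHodographData.mem_region_snd (h : IsHodographData R C s r B)
    (hq : q ∈ hodographRegion R s r) {y : ℝ} (hy : y ∈ Icc q.1 q.2) :
    (q.1, y) ∈ hodographRegion R s r := h.mem_region hq le_rfl hy.1 hy.2

lemma IsHodographData.speed_le (h : IsHodographData R C s r B) (hq : q ∈ hodographRegion R s r)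
    {c₀ : ℝ} (hc₀ : ∀ x, C (riemannDiff s r (x, x)) ≤ c₀) : C (riemannDiff s r q) ≤ c₀ := by
  have hle : riemannDiff s r q ≤ riemannDiff s r (q.2, q.2) := h.riemannDiff_le hq.2 le_rfl
  have hmem : ∀ Z ∈ Icc (riemannDiff s r q) (riemannDiff s r (q.2, q.2)), Z ∈ R :=
    fun Z hZ => h.isUpperSet hZ.1 hq.1
  refine (monotoneOn_of_hasDerivWithinAt_nonneg (convex_Icc _ _)
    (h.contDiffOn_speed.continuousOn.mono hmem)
    (fun Z hZ => (h.hasDerivAt_speed (hmem Z (interior_subset hZ))).hasDerivWithinAt)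
    (fun Z hZ => h.deriv_speed_nonneg Z (hmem Z (interior_subset hZ)))
    (left_mem_Icc.2 hle) (right_mem_Icc.2 hle) hle).trans (hc₀ q.2)

namespace IsHodographMap

lemma hasDerivAt_X_fst (H : IsHodographMap R C s r B X T P Q) (hq : q ∈ hodographDomain R s r) :
    HasDerivAt (fun x => X (x, q.2)) (C (riemannDiff s r q) * Q q) q.1 :=
  (hasDerivAt_fst_of_hasFDerivAt (H.hasStrictFDerivAt_X q hq).hasFDerivAt).congr_deriv (by simp)

lemma hasDerivAt_X_snd (H : IsHodographMap R C s r B X T P Q) (hq : q ∈ hodographDomain R s r) :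
    HasDerivAt (fun y => X (q.1, y)) (C (riemannDiff s r q) * P q) q.2 :=
  (hasDerivAt_snd_of_hasFDerivAt (H.hasStrictFDerivAt_X q hq).hasFDerivAt).congr_deriv (by simp)

lemma hasDerivAt_T_fst (H : IsHodographMap R C s r B X T P Q) (hq : q ∈ hodographDomain R s r) :
    HasDerivAt (fun x => T (x, q.2)) (-Q q) q.1 :=
  (hasDerivAt_fst_of_hasFDerivAt (H.hasStrictFDerivAt_T q hq).hasFDerivAt).congr_deriv (by simp)

lemma hasDerivAt_T_snd (H : IsHodographMap R C s r B X T P Q) (hq : q ∈ hodographDomain R s r) :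
    HasDerivAt (fun y => T (q.1, y)) (P q) q.2 :=
  (hasDerivAt_snd_of_hasFDerivAt (H.hasStrictFDerivAt_T q hq).hasFDerivAt).congr_deriv (by simp)

section Monotonicity

lemma strictMonoOn_X_fst (h : IsHodographData R C s r B) (H : IsHodographMap R C s r B X T P Q)
    (hq : q ∈ hodographRegion R s r) : StrictMonoOn (fun x => X (x, q.2)) (Icc q.1 q.2) := by
  have hmem := fun x hx => h.mem_region_fst hq (x := x) hx
  exact strictMonoOn_of_hasDerivWithinAt_pos (convex_Icc _ _)
    (fun x hx => (H.hasDerivAt_X_fst (hmem x hx).1).continuousAt.continuousWithinAt)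
    (fun x hx => (H.hasDerivAt_X_fst (hmem x (interior_subset hx)).1).hasDerivWithinAt)
    fun x hx => have hx := hmem x (interior_subset hx)
      mul_pos (h.speed_pos _ hx.1) (H.Q_pos _ hx.1 hx.2)

lemma strictMonoOn_X_snd (h : IsHodographData R C s r B) (H : IsHodographMap R C s r B X T P Q)
    (hq : q ∈ hodographRegion R s r) : StrictMonoOn (fun y => X (q.1, y)) (Icc q.1 q.2) := by
  have hmem := fun y hy => h.mem_region_snd hq (y := y) hy
  exact strictMonoOn_of_hasDerivWithinAt_pos (convex_Icc _ _)
    (fun y hy => (H.hasDerivAt_X_snd (hmem y hy).1).continuousAt.continuousWithinAt)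
    (fun y hy => (H.hasDerivAt_X_snd (hmem y (interior_subset hy)).1).hasDerivWithinAt)
    fun y hy => have hy := hmem y (interior_subset hy)
      mul_pos (h.speed_pos _ hy.1) (H.P_pos _ hy.1 hy.2)

lemma strictAntiOn_T_fst (h : IsHodographData R C s r B) (H : IsHodographMap R C s r B X T P Q)
    (hq : q ∈ hodographRegion R s r) : StrictAntiOn (fun x => T (x, q.2)) (Icc q.1 q.2) := by
  have hmem := fun x hx => h.mem_region_fst hq (x := x) hx
  exact strictAntiOn_of_hasDerivWithinAt_neg (convex_Icc _ _)
    (fun x hx => (H.hasDerivAt_T_fst (hmem x hx).1).continuousAt.continuousWithinAt)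
    (fun x hx => (H.hasDerivAt_T_fst (hmem x (interior_subset hx)).1).hasDerivWithinAt)
    fun x hx => have hx := hmem x (interior_subset hx)
      neg_neg_of_pos (H.Q_pos _ hx.1 hx.2)

lemma strictMonoOn_T_snd (h : IsHodographData R C s r B) (H : IsHodographMap R C s r B X T P Q)
    (hq : q ∈ hodographRegion R s r) : StrictMonoOn (fun y => T (q.1, y)) (Icc q.1 q.2) := by
  have hmem := fun y hy => h.mem_region_snd hq (y := y) hy
  exact strictMonoOn_of_hasDerivWithinAt_pos (convex_Icc _ _)
    (fun y hy => (H.hasDerivAt_T_snd (hmem y hy).1).continuousAt.continuousWithinAt)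
    (fun y hy => (H.hasDerivAt_T_snd (hmem y (interior_subset hy)).1).hasDerivWithinAt)
    fun y hy => have hy := hmem y (interior_subset hy)
      H.P_pos _ hy.1 hy.2

lemma le_X (h : IsHodographData R C s r B) (H : IsHodographMap R C s r B X T P Q)
    (hq : q ∈ hodographRegion R s r) : q.1 ≤ X q := by
  have hmono := (H.strictMonoOn_X_snd h hq).monotoneOn (left_mem_Icc.2 hq.2) (right_mem_Icc.2 hq.2)
    hq.2
  rwa [H.X_diag] at hmono

lemma X_le (h : IsHodographData R C s r B) (H : IsHodographMap R C s r B X T P Q)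
    (hq : q ∈ hodographRegion R s r) : X q ≤ q.2 := by
  have hmono := (H.strictMonoOn_X_fst h hq).monotoneOn (left_mem_Icc.2 hq.2) (right_mem_Icc.2 hq.2)
    hq.2
  rwa [H.X_diag] at hmono

lemma X_le_add_mul_T (h : IsHodographData R C s r B) (H : IsHodographMap R C s r B X T P Q)
    (hq : q ∈ hodographRegion R s r) {c₀ : ℝ} (hc₀ : ∀ x, C (riemannDiff s r (x, x)) ≤ c₀) :
    X q ≤ q.1 + c₀ * T q := by
  have hmem := fun y hy => h.mem_region_snd hq (y := y) hy
  have hderiv := fun y hy => ((H.hasDerivAt_T_snd (hmem y hy).1).const_mul c₀).sub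
    (H.hasDerivAt_X_snd (hmem y hy).1)
  have hmono := monotoneOn_of_hasDerivWithinAt_nonneg (convex_Icc _ _)
    (fun y hy => (hderiv y hy).continuousAt.continuousWithinAt)
    (fun y hy => (hderiv y (interior_subset hy)).hasDerivWithinAt)
    (fun y hy => by
      have hy := hmem y (interior_subset hy)
      exact sub_nonneg.2 (mul_le_mul_of_nonneg_right (h.speed_le hy hc₀) (H.P_pos _ hy.1 hy.2).le))
    (left_mem_Icc.2 hq.2) (right_mem_Icc.2 hq.2) hq.2
  simp only [Pi.sub_apply, H.T_diag, H.X_diag] at hmono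
  linarith

lemma sub_mul_T_le_X (h : IsHodographData R C s r B) (H : IsHodographMap R C s r B X T P Q)
    (hq : q ∈ hodographRegion R s r) {c₀ : ℝ} (hc₀ : ∀ x, C (riemannDiff s r (x, x)) ≤ c₀) :
    q.2 - c₀ * T q ≤ X q := by
  have hmem := fun x hx => h.mem_region_fst hq (x := x) hx
  have hderiv := fun x hx => (H.hasDerivAt_X_fst (hmem x hx).1).add
    ((H.hasDerivAt_T_fst (hmem x hx).1).const_mul c₀)
  have hanti := antitoneOn_of_hasDerivWithinAt_nonpos (convex_Icc _ _)
    (fun x hx => (hderiv x hx).continuousAt.continuousWithinAt)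
    (fun x hx => (hderiv x (interior_subset hx)).hasDerivWithinAt)
    (fun x hx => by
      have hx := hmem x (interior_subset hx)
      have := mul_le_mul_of_nonneg_right (h.speed_le hx hc₀) (H.Q_pos _ hx.1 hx.2).le
      linarith)
    (left_mem_Icc.2 hq.2) (right_mem_Icc.2 hq.2) hq.2
  simp only [Pi.add_apply, H.T_diag, H.X_diag] at hanti
  linarith

lemma volume_le (h : IsHodographData R C s r B) (H : IsHodographMap R C s r B X T P Q)
    (hΦ : IsVolumeFunction R C Φ) (hq : q ∈ hodographRegion R s r) :
    Φ (riemannDiff s r q) ≤ Φ (riemannDiff s r (q.1, q.1)) + 2 * B * T q := by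
  have hmem := fun y hy => h.mem_region_snd hq (y := y) hy
  have hderiv := fun y hy => ((H.hasDerivAt_T_snd (hmem y hy).1).const_mul (2 * B)).sub
    (HasDerivAt.comp (h := fun y => riemannDiff s r (q.1, y)) y (hΦ.hasDerivAt _ (hmem y hy).1)
      (h.hasDerivAt_riemannDiff_snd (q.1, y)))
  have hmono := monotoneOn_of_hasDerivWithinAt_nonneg (convex_Icc _ _)
    (fun y hy => (hderiv y hy).continuousAt.continuousWithinAt)
    (fun y hy => (hderiv y (interior_subset hy)).hasDerivWithinAt)
    (fun y hy => by
      have hy := hmem y (interior_subset hy)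
      have hB := h.bound_pos
      have hC := h.speed_pos _ hy.1
      have hP := mul_le_mul_of_nonneg_left (H.le_P _ hy.1 hy.2) (mul_pos two_pos hB).le
      refine sub_nonneg.2 (le_of_eq_of_le ?_ hP)
      field_simp
      ring)
    (left_mem_Icc.2 hq.2) (right_mem_Icc.2 hq.2) hq.2
  simp only [Pi.sub_apply, Function.comp_apply, H.T_diag] at hmono
  linarith

end Monotonicity

theorem injOn (h : IsHodographData R C s r B) (H : IsHodographMap R C s r B X T P Q) :
    InjOn (fun q => (X q, T q)) (hodographRegion R s r) := by
  intro q hq q' hq' heq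
  obtain ⟨hX, hT⟩ : X q = X q' ∧ T q = T q' := Prod.ext_iff.1 heq
  clear heq
  wlog hx : q.1 ≤ q'.1 generalizing q q'
  · exact (this hq' hq hX.symm hT.symm (le_of_not_ge hx)).symm
  rcases le_or_gt q'.2 q.2 with hy | hy
  · have hmem := h.mem_region hq hx (hq'.2.trans hy) le_rfl
    have hTx := H.strictAntiOn_T_fst h hq
    have hTy := H.strictMonoOn_T_snd h hmem
    have hq'x : q'.1 ∈ Icc q.1 q.2 := ⟨hx, hq'.2.trans hy⟩
    have hq'y : q'.2 ∈ Icc q'.1 q.2 := ⟨hq'.2, hy⟩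
    have hTx' : T (q'.1, q.2) ≤ T q := hTx.antitoneOn (left_mem_Icc.2 hq.2) hq'x hx
    have hTy' : T q' ≤ T (q'.1, q.2) := hTy.monotoneOn hq'y (right_mem_Icc.2 hmem.2) hy
    exact Prod.ext
      (hTx.injOn (left_mem_Icc.2 hq.2) hq'x (le_antisymm (hT.trans_le hTy') hTx'))
      (hTy.injOn hq'y (right_mem_Icc.2 hmem.2) (le_antisymm hTy' (hTx'.trans_eq hT))).symm
  · exfalso
    refine hX.not_lt ?_
    rcases le_or_gt q'.1 q.2 with hxy | hxy
    · calc X q ≤ X (q'.1, q.2) := (H.strictMonoOn_X_fst h hq).monotoneOn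
            (left_mem_Icc.2 hq.2) ⟨hx, hxy⟩ hx
        _ < X q' := H.strictMonoOn_X_snd h hq' ⟨hxy, hy.le⟩ (right_mem_Icc.2 hq'.2) hy
    · exact (H.X_le h hq).trans_lt (hxy.trans_le (H.le_X h hq'))

end IsHodographMap

end HodographRegion

section HodographInverse

variable {R : Set ℝ} {C s r Φ : ℝ → ℝ} {B : ℝ} {X T P Q : ℝ × ℝ → ℝ} {q : ℝ × ℝ}

/-- The shape of the derivative of `(x, t) ↦ (α, β)` when `α` and `β` are transported with speeds
`c` and `-c`, that is, `α_t + c α_x = 0` and `β_t - c β_x = 0`. -/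
noncomputable def transportDeriv (c a b : ℝ) : ℝ × ℝ →L[ℝ] ℝ × ℝ :=
  (a • (ContinuousLinearMap.fst ℝ ℝ ℝ - c • ContinuousLinearMap.snd ℝ ℝ ℝ)).prod
    (b • (ContinuousLinearMap.fst ℝ ℝ ℝ + c • ContinuousLinearMap.snd ℝ ℝ ℝ))

/-- The derivative of `(X, T)` as a linear equivalence, where `c = C (Z q)`, `a = P q` and
`b = Q q`. -/
noncomputable def hodographEquiv (c a b : ℝ) (hc : c ≠ 0) (ha : a ≠ 0) (hb : b ≠ 0) :
    (ℝ × ℝ) ≃L[ℝ] ℝ × ℝ :=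
  ContinuousLinearEquiv.equivOfInverse
    (((c * b) • ContinuousLinearMap.fst ℝ ℝ ℝ + (c * a) • ContinuousLinearMap.snd ℝ ℝ ℝ).prod
      (-b • ContinuousLinearMap.fst ℝ ℝ ℝ + a • ContinuousLinearMap.snd ℝ ℝ ℝ))
    (transportDeriv c (1 / (2 * c * b)) (1 / (2 * c * a)))
    (fun q => by ext <;> simp [transportDeriv] <;> field_simp <;> ring)
    (fun q => by ext <;> simp [transportDeriv] <;> field_simp <;> ring)

lemma IsHodographData.isCompact_box_inter (h : IsHodographData R C s r B) (m a b : ℝ) :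
    IsCompact {q ∈ Icc a b ×ˢ Icc a b | q.1 ≤ q.2 ∧ m ≤ riemannDiff s r q} :=
  (isCompact_Icc.prod isCompact_Icc).inter_right ((isClosed_le continuous_fst continuous_snd).inter
    (isClosed_le continuous_const h.continuous_riemannDiff))

namespace IsHodographMap

lemma contDiffAt_X (h : IsHodographData R C s r B) (H : IsHodographMap R C s r B X T P Q)
    (hq : q ∈ hodographDomain R s r) : ContDiffAt ℝ 1 X q :=
  contDiffAt_one_iff.2 ⟨_, _, h.isOpen_hodographDomain.mem_nhds hq,
    ((h.continuousOn_speed.mul H.continuousOn_Q).smul continuousOn_const).add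
      ((h.continuousOn_speed.mul H.continuousOn_P).smul continuousOn_const),
    fun q hq => (H.hasStrictFDerivAt_X q hq).hasFDerivAt⟩

lemma contDiffAt_T (h : IsHodographData R C s r B) (H : IsHodographMap R C s r B X T P Q)
    (hq : q ∈ hodographDomain R s r) : ContDiffAt ℝ 1 T q :=
  contDiffAt_one_iff.2 ⟨_, _, h.isOpen_hodographDomain.mem_nhds hq,
    (H.continuousOn_Q.neg.smul continuousOn_const).add
      (H.continuousOn_P.smul continuousOn_const),
    fun q hq => (H.hasStrictFDerivAt_T q hq).hasFDerivAt⟩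

lemma exists_localInverse (h : IsHodographData R C s r B) (H : IsHodographMap R C s r B X T P Q)
    (hq : q ∈ hodographRegion R s r) :
    ∃ G : ℝ × ℝ → ℝ × ℝ, ContDiffAt ℝ 1 G (X q, T q) ∧ G (X q, T q) = q ∧
      (∃ a b, HasFDerivAt G (transportDeriv (C (riemannDiff s r q)) a b) (X q, T q)) ∧
      ∀ᶠ w in nhds (X q, T q), (X (G w), T (G w)) = w := by
  have hcd : ContDiffAt ℝ 1 (fun q => (X q, T q)) q :=
    (H.contDiffAt_X h hq.1).prodMk (H.contDiffAt_T h hq.1)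
  have hstrict : HasStrictFDerivAt (fun q => (X q, T q)) ((hodographEquiv (C (riemannDiff s r q))
      (P q) (Q q) (h.speed_ne_zero hq.1) (H.P_pos q hq.1 hq.2).ne' (H.Q_pos q hq.1 hq.2).ne' :
      (ℝ × ℝ) ≃L[ℝ] ℝ × ℝ) : ℝ × ℝ →L[ℝ] ℝ × ℝ) q :=
    (H.hasStrictFDerivAt_X q hq.1).prodMk (H.hasStrictFDerivAt_T q hq.1)
  exact ⟨hcd.localInverse hstrict.hasFDerivAt one_ne_zero,
    hcd.to_localInverse hstrict.hasFDerivAt one_ne_zero,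
    hcd.localInverse_apply_image hstrict.hasFDerivAt one_ne_zero,
    ⟨_, _, hstrict.to_localInverse.hasFDerivAt⟩, hstrict.eventually_right_inverse⟩

/-- Just below the diagonal `T` is negative, because `T` vanishes on it and `T_y > 0` nearby. -/
lemma eventually_mem_region (h : IsHodographData R C s r B) (H : IsHodographMap R C s r B X T P Q)
    (hq : q ∈ hodographRegion R s r) : ∀ᶠ q' in nhds q, 0 ≤ T q' → q' ∈ hodographRegion R s r := by
  have hΩ := h.isOpen_hodographDomain.mem_nhds hq.1
  rcases hq.2.lt_or_eq with hlt | heq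
  · filter_upwards [hΩ, (isOpen_lt continuous_fst continuous_snd).mem_nhds hlt]
      with q' hq' hlt' _ using ⟨hq', le_of_lt hlt'⟩
  have hP : ∀ᶠ q' in nhds q, q' ∈ hodographDomain R s r ∧ 0 < P q' :=
    Filter.Eventually.and hΩ ((H.continuousOn_P.continuousAt hΩ).eventually
      (lt_mem_nhds (H.P_pos q hq.1 hq.2)))
  obtain ⟨ε, hε, hball⟩ := Metric.eventually_nhds_iff_ball.1 hP
  filter_upwards [Metric.ball_mem_nhds q hε] with q' hq' hT
  refine ⟨(hball q' hq').1, le_of_not_gt fun hlt => hT.not_gt ?_⟩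
  rw [← ball_prod_same, mem_prod, Real.ball_eq_Ioo, Real.ball_eq_Ioo, ← heq] at hq'
  have hseg : ∀ y ∈ Icc q'.2 q'.1, (q'.1, y) ∈ hodographDomain R s r ∧ 0 < P (q'.1, y) := by
    intro y hy
    apply hball
    rw [← ball_prod_same, mem_prod, Real.ball_eq_Ioo, Real.ball_eq_Ioo, ← heq]
    exact ⟨hq'.1, hq'.2.1.trans_le hy.1, hy.2.trans_lt hq'.1.2⟩
  have hmono := strictMonoOn_of_hasDerivWithinAt_pos (convex_Icc q'.2 q'.1)
    (fun y hy => (H.hasDerivAt_T_snd (hseg y hy).1).continuousAt.continuousWithinAt)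
    (fun y hy => (H.hasDerivAt_T_snd (hseg y (interior_subset hy)).1).hasDerivWithinAt)
    (fun y hy => (hseg y (interior_subset hy)).2)
    (left_mem_Icc.2 hlt.le) (right_mem_Icc.2 hlt.le) hlt
  exact hmono.trans_eq (H.T_diag q'.1)

lemma eventually_localInverse_mem_region (h : IsHodographData R C s r B)
    (H : IsHodographMap R C s r B X T P Q) (hq : q ∈ hodographRegion R s r)
    {G : ℝ × ℝ → ℝ × ℝ} (hG : ContinuousAt G (X q, T q)) (hGq : G (X q, T q) = q)
    (hinv : ∀ᶠ w in nhds (X q, T q), (X (G w), T (G w)) = w) :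
    ∀ᶠ w in nhds (X q, T q), 0 ≤ w.2 → G w ∈ hodographRegion R s r := by
  have hev := hG.eventually (hGq.symm ▸ H.eventually_mem_region h hq)
  filter_upwards [hev, hinv] with w hw hinv ht
  exact hw (ht.trans_eq (congrArg Prod.snd hinv).symm)

lemma isClosed_reached_times (h : IsHodographData R C s r B)
    (H : IsHodographMap R C s r B X T P Q) (hΦ : IsVolumeFunction R C Φ) {c₀ N : ℝ}
    (hc₀ : ∀ x, C (riemannDiff s r (x, x)) ≤ c₀) (hN : ∀ x, Φ (riemannDiff s r (x, x)) ≤ N)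
    (x t₁ : ℝ) :
    IsClosed ({t | (x, t) ∈ (fun q => (X q, T q)) '' hodographRegion R s r} ∩ Icc 0 t₁) := by
  obtain ⟨m, hm, hle⟩ := hΦ.exists_le_of_le (N + 2 * B * t₁)
  have hc₀' : 0 < c₀ := (h.speed_pos _ (h.diag_mem 0)).trans_le (hc₀ 0)
  set K := {q ∈ Icc (x - c₀ * t₁) (x + c₀ * t₁) ×ˢ Icc (x - c₀ * t₁) (x + c₀ * t₁) |
    q.1 ≤ q.2 ∧ m ≤ riemannDiff s r q}
  have hKΩ : K ⊆ hodographRegion R s r := fun q hq => ⟨h.isUpperSet hq.2.2 hm, hq.2.1⟩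
  have hcont : ContinuousOn (fun q => (X q, T q)) K := fun q hq =>
    ((H.contDiffAt_X h (hKΩ hq).1).continuousAt.prodMk
      (H.contDiffAt_T h (hKΩ hq).1).continuousAt).continuousWithinAt
  have hclosed : IsClosed ((fun q => (X q, T q)) '' K) :=
    ((h.isCompact_box_inter m _ _).image_of_continuousOn hcont).isClosed
  convert (hclosed.preimage (Continuous.prodMk_right x)).inter (isClosed_Icc (a := 0) (b := t₁))
    using 1
  ext t
  refine and_congr_left fun ht => ⟨?_, fun ⟨q, hq, heq⟩ => ⟨q, hKΩ hq, heq⟩⟩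
  rintro ⟨q, hq, heq⟩
  obtain ⟨rfl, rfl⟩ := Prod.mk_inj.1 heq
  have hct := mul_le_mul_of_nonneg_left ht.2 hc₀'.le
  have hBt := mul_le_mul_of_nonneg_left ht.2 (mul_pos two_pos h.bound_pos).le
  have h₁ := H.X_le_add_mul_T h hq hc₀
  have h₂ := H.sub_mul_T_le_X h hq hc₀
  have hΦq := H.volume_le h hΦ hq
  exact ⟨q, ⟨⟨⟨by linarith, by linarith [hq.2]⟩, by linarith [hq.2], by linarith⟩, hq.2,
    hle _ hq.1 (by linarith [hN q.1])⟩, rfl⟩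

theorem surjOn (h : IsHodographData R C s r B) (H : IsHodographMap R C s r B X T P Q)
    (hΦ : IsVolumeFunction R C Φ) {c₀ N : ℝ} (hc₀ : ∀ x, C (riemannDiff s r (x, x)) ≤ c₀)
    (hN : ∀ x, Φ (riemannDiff s r (x, x)) ≤ N) :
    SurjOn (fun q => (X q, T q)) (hodographRegion R s r) (univ ×ˢ Ici 0) := by
  rintro ⟨x, t₁⟩ ⟨-, ht₁⟩
  have hdiag : (x, (0 : ℝ)) ∈ (fun q => (X q, T q)) '' hodographRegion R s r :=
    ⟨(x, x), ⟨h.diag_mem x, le_rfl⟩, Prod.ext (H.X_diag x) (H.T_diag x)⟩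
  refine (H.isClosed_reached_times h hΦ hc₀ hN x t₁).Icc_subset_of_forall_mem_nhdsWithin hdiag ?_
    (right_mem_Icc.2 ht₁)
  rintro t ⟨⟨q, hq, heq⟩, ht⟩
  obtain ⟨rfl, rfl⟩ := Prod.mk_inj.1 heq
  obtain ⟨G, hG, hGq, -, hinv⟩ := H.exists_localInverse h hq
  have hev := (H.eventually_localInverse_mem_region h hq hG.continuousAt hGq hinv).and hinv
  have hev' := (Continuous.prodMk_right (X q)).continuousAt.eventually hev
  filter_upwards [hev'.filter_mono nhdsWithin_le_nhds, self_mem_nhdsWithin] with t' hw ht'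
  exact ⟨_, hw.1 (ht.1.trans (le_of_lt ht')), hw.2⟩

theorem exists_feet (h : IsHodographData R C s r B) (H : IsHodographMap R C s r B X T P Q)
    (hΦ : IsVolumeFunction R C Φ) {c₀ N : ℝ} (hc₀ : ∀ x, C (riemannDiff s r (x, x)) ≤ c₀)
    (hN : ∀ x, Φ (riemannDiff s r (x, x)) ≤ N) :
    ∃ q : ℝ × ℝ → ℝ × ℝ, (∀ x, q (x, 0) = (x, x)) ∧
      MapsTo q (univ ×ˢ Ici 0) (hodographDomain R s r) ∧ ContDiffOn ℝ 1 q (univ ×ˢ Ici 0) ∧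
      ∀ w ∈ univ ×ˢ Ici 0, ∃ a b, HasFDerivWithinAt q
        (transportDeriv (C (riemannDiff s r (q w))) a b) (univ ×ˢ Ici 0) w := by
  have hsurj := H.surjOn h hΦ hc₀ hN
  set F := fun q => (X q, T q)
  set q := Function.invFunOn F (hodographRegion R s r)
  have hmem : MapsTo q (univ ×ˢ Ici 0) (hodographRegion R s r) := hsurj.mapsTo_invFunOn
  have hFq : RightInvOn q F (univ ×ˢ Ici 0) := hsurj.rightInvOn_invFunOn
  have hqF : LeftInvOn q F (hodographRegion R s r) := (H.injOn h).leftInvOn_invFunOn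
  have hlocal : ∀ w ∈ univ ×ˢ Ici (0 : ℝ), ∃ G : ℝ × ℝ → ℝ × ℝ, ContDiffAt ℝ 1 G w ∧
      (∃ a b, HasFDerivAt G (transportDeriv (C (riemannDiff s r (q w))) a b) w) ∧
      q =ᶠ[nhdsWithin w (univ ×ˢ Ici 0)] G := by
    intro w hw
    obtain ⟨G, hG, hGq, hG', hinv⟩ := H.exists_localInverse h (hmem hw)
    have hev := H.eventually_localInverse_mem_region h (hmem hw) hG.continuousAt hGq hinv
    rw [show (X (q w), T (q w)) = w from hFq hw] at hG hG' hinv hev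
    refine ⟨G, hG, hG', ?_⟩
    filter_upwards [hev.filter_mono nhdsWithin_le_nhds, hinv.filter_mono nhdsWithin_le_nhds,
      self_mem_nhdsWithin] with w' hG'mem hG'eq hw'
    rw [← hqF (hG'mem hw'.2)]
    exact congrArg q hG'eq.symm
  refine ⟨q, fun x => ?_, fun w hw => (hmem hw).1, fun w hw => ?_, fun w hw => ?_⟩
  · have hx : F (x, x) = (x, 0) := Prod.ext (H.X_diag x) (H.T_diag x)
    rw [← hx, hqF ⟨h.diag_mem x, le_rfl⟩]
  · obtain ⟨G, hG, -, hqG⟩ := hlocal w hw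
    exact hG.contDiffWithinAt.congr_of_eventuallyEq_of_mem hqG hw
  · obtain ⟨G, -, ⟨a, b, hG⟩, hqG⟩ := hlocal w hw
    exact ⟨a, b, hG.hasFDerivWithinAt.congr_of_eventuallyEq hqG (hqG.self_of_nhdsWithin hw)⟩

end IsHodographMap

end HodographInverse

section RiemannSystem

variable {R : Set ℝ} {C s r Φ : ℝ → ℝ} {B : ℝ}

theorem IsHodographData.exists_solution (h : IsHodographData R C s r B)
    (hΦ : IsVolumeFunction R C Φ) {c₀ N : ℝ} (hc₀ : ∀ x, C (riemannDiff s r (x, x)) ≤ c₀)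
    (hN : ∀ x, Φ (riemannDiff s r (x, x)) ≤ N) :
    ∃ Z u : ℝ × ℝ → ℝ, (∀ x, Z (x, 0) = (s x - r x) / 2) ∧ (∀ x, u (x, 0) = (s x + r x) / 2) ∧
      MapsTo Z (univ ×ˢ Ici 0) R ∧ ContDiffOn ℝ 1 Z (univ ×ˢ Ici 0) ∧
      ContDiffOn ℝ 1 u (univ ×ˢ Ici 0) ∧ ∀ w ∈ univ ×ˢ Ici 0, ∃ a b : ℝ,
        HasFDerivWithinAt Z (a • ContinuousLinearMap.fst ℝ ℝ ℝ
          - (C (Z w) * b) • ContinuousLinearMap.snd ℝ ℝ ℝ) (univ ×ˢ Ici 0) w ∧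
        HasFDerivWithinAt u (b • ContinuousLinearMap.fst ℝ ℝ ℝ
          - (C (Z w) * a) • ContinuousLinearMap.snd ℝ ℝ ℝ) (univ ×ˢ Ici 0) w := by
  obtain ⟨X, T, P, Q, H⟩ := h.exists_isHodographMap
  obtain ⟨q, hq₀, hqΩ, hq, hq'⟩ := H.exists_feet h hΦ hc₀ hN
  have hs := h.contDiff_s.comp_contDiffOn hq.fst
  have hr := h.contDiff_r.comp_contDiffOn hq.snd
  refine ⟨fun w => riemannDiff s r (q w), fun w => (s (q w).1 + r (q w).2) / 2,
    fun x => by simp only [hq₀, riemannDiff], fun x => by simp only [hq₀], hqΩ,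
    (hs.sub hr).div_const 2, (hs.add hr).div_const 2, fun w hw => ?_⟩
  obtain ⟨a, b, hab⟩ := hq' w hw
  have hs' := (h.contDiff_s.differentiable one_ne_zero (q w).1).hasDerivAt.comp_hasFDerivWithinAt w
    hab.fst
  have hr' := (h.contDiff_r.differentiable one_ne_zero (q w).2).hasDerivAt.comp_hasFDerivWithinAt w
    hab.snd
  have hhalf_sub : ∀ w ∈ univ ×ˢ Ici (0 : ℝ),
      riemannDiff s r (q w) = (s (q w).1 - r (q w).2) * (1 / 2) :=
    fun _ _ => div_eq_mul_one_div _ _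
  have hhalf_add : ∀ w ∈ univ ×ˢ Ici (0 : ℝ),
      (s (q w).1 + r (q w).2) / 2 = (s (q w).1 + r (q w).2) * (1 / 2) :=
    fun _ _ => div_eq_mul_one_div _ _
  refine ⟨(deriv s (q w).1 * a - deriv r (q w).2 * b) / 2,
    (deriv s (q w).1 * a + deriv r (q w).2 * b) / 2,
    (((hs'.sub hr').mul_const (1 / 2 : ℝ)).congr_fderiv ?_).congr hhalf_sub (hhalf_sub w hw),
    (((hs'.add hr').mul_const (1 / 2 : ℝ)).congr_fderiv ?_).congr hhalf_add (hhalf_add w hw)⟩ <;>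
  · ext <;> simp [transportDeriv] <;> ring

/-- The extension to negative times by the tangent at `0`, which turns one-sided derivatives at
`t = 0` into two-sided ones. -/
noncomputable def linearExtension (f : ℝ → ℝ) (t : ℝ) : ℝ :=
  if 0 ≤ t then f t else f 0 + t * derivWithin f (Ici 0) 0

lemma linearExtension_of_nonneg (f : ℝ → ℝ) {t : ℝ} (ht : 0 ≤ t) : linearExtension f t = f t :=
  if_pos ht

lemma hasDerivAt_linearExtension {f : ℝ → ℝ} {d t : ℝ} (ht : 0 ≤ t)
    (hf : HasDerivWithinAt f d (Ici 0) t) : HasDerivAt (linearExtension f) d t := by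
  have hright : HasDerivWithinAt (linearExtension f) d (Ici 0) t :=
    hf.congr (fun _ ht => linearExtension_of_nonneg f ht) (linearExtension_of_nonneg f ht)
  rcases ht.eq_or_lt with rfl | hlt
  · have hleft : HasDerivWithinAt (linearExtension f) d (Iic 0) 0 := by
      have hlin : HasDerivAt (fun t => f 0 + t * d) d 0 := by
        simpa using ((hasDerivAt_id (0 : ℝ)).mul_const d).const_add (f 0)
      refine hlin.hasDerivWithinAt.congr (fun t ht => ?_)
        (by simp [linearExtension_of_nonneg f le_rfl])
      rcases (mem_Iic.1 ht).eq_or_lt with rfl | hneg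
      · simp [linearExtension_of_nonneg f le_rfl]
      · rw [linearExtension, if_neg hneg.not_ge, hf.derivWithin (uniqueDiffOn_Ici 0 0 self_mem_Ici)]
    rw [← hasDerivWithinAt_univ, ← Iic_union_Ici]
    exact hleft.union hright
  · exact hright.hasDerivAt (Ici_mem_nhds hlt)

lemma hasDerivAt_fst_of_hasFDerivWithinAt {f : ℝ × ℝ → ℝ} {L : ℝ × ℝ →L[ℝ] ℝ} {x t : ℝ}
    (ht : 0 ≤ t) (hf : HasFDerivWithinAt f L (univ ×ˢ Ici 0) (x, t)) :
    HasDerivAt (fun y => f (y, t)) (L (1, 0)) x :=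
  hf.comp_hasDerivAt x ((hasDerivAt_id x).prodMk (hasDerivAt_const x t))
    (Eventually.of_forall fun _ => mk_mem_prod (mem_univ _) ht)

lemma hasDerivWithinAt_snd_of_hasFDerivWithinAt {f : ℝ × ℝ → ℝ} {L : ℝ × ℝ →L[ℝ] ℝ} {x t : ℝ}
    (hf : HasFDerivWithinAt f L (univ ×ˢ Ici 0) (x, t)) :
    HasDerivWithinAt (fun y => f (x, y)) (L (0, 1)) (Ici 0) t :=
  hf.comp_hasDerivWithinAt t ((hasDerivWithinAt_const t _ x).prodMk (hasDerivWithinAt_id t _))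
    fun _ hy => ⟨mem_univ _, hy⟩

lemma genPSysSol_linearExtension {p : ℝ → ℝ} {τ u : ℝ × ℝ → ℝ}
    (hp : ∀ v, 0 < v → HasDerivAt p (deriv p v) v) (hpos : MapsTo τ (univ ×ˢ Ici 0) (Ioi 0))
    (hτ : ContDiffOn ℝ 1 τ (univ ×ˢ Ici 0)) (hu : ContDiffOn ℝ 1 u (univ ×ˢ Ici 0))
    (hderiv : ∀ w ∈ univ ×ˢ Ici 0, ∃ a b : ℝ,
      HasFDerivWithinAt τ (a • ContinuousLinearMap.fst ℝ ℝ ℝ + b • ContinuousLinearMap.snd ℝ ℝ ℝ)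
        (univ ×ˢ Ici 0) w ∧
      HasFDerivWithinAt u (b • ContinuousLinearMap.fst ℝ ℝ ℝ
        - (deriv p (τ w) * a) • ContinuousLinearMap.snd ℝ ℝ ℝ) (univ ×ˢ Ici 0) w) :
    GenPSysSol p (Ici 0) 1 (fun x => linearExtension fun t => τ (x, t))
      (fun x => linearExtension fun t => u (x, t)) := by
  have hext (f : ℝ × ℝ → ℝ) {t : ℝ} (ht : 0 ≤ t) (x : ℝ) :
      linearExtension (fun t => f (x, t)) t = f (x, t) := linearExtension_of_nonneg _ ht
  refine ⟨fun x t ht => ?_, ?_, ?_, fun x t ht => ?_, fun x t ht => ?_⟩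
  · exact (hpos (mk_mem_prod (mem_univ x) ht)).trans_eq (hext τ ht x).symm
  · exact_mod_cast hτ.congr fun w hw => hext τ hw.2 w.1
  · exact_mod_cast hu.congr fun w hw => hext u hw.2 w.1
  · obtain ⟨a, b, ha, hb⟩ := hderiv (x, t) ⟨mem_univ x, ht⟩
    simp only [hext u ht]
    rw [(hasDerivAt_linearExtension ht (hasDerivWithinAt_snd_of_hasFDerivWithinAt ha)).deriv,
      (hasDerivAt_fst_of_hasFDerivWithinAt ht hb).deriv]
    simp
  · obtain ⟨a, b, ha, hb⟩ := hderiv (x, t) ⟨mem_univ x, ht⟩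
    simp only [hext τ ht]
    have hpx : HasDerivAt (fun y => p (τ (y, t))) _ x :=
      (hp _ (hpos ⟨mem_univ x, ht⟩)).comp x (hasDerivAt_fst_of_hasFDerivWithinAt ht ha)
    rw [(hasDerivAt_linearExtension ht (hasDerivWithinAt_snd_of_hasFDerivWithinAt hb)).deriv,
      hpx.deriv]
    simp

end RiemannSystem

section Sufficiency

lemma contDiffOn_one_of_hasDerivAt {f f' : ℝ → ℝ} {S : Set ℝ} (hS : IsOpen S)
    (hf : ∀ x ∈ S, HasDerivAt f (f' x) x) (hf' : ContinuousOn f' S) : ContDiffOn ℝ 1 f S :=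
  (contDiffOn_succ_iff_deriv_of_isOpen (n := 0) hS).2
    ⟨fun x hx => (hf x hx).differentiableAt.differentiableWithinAt, by simp,
      contDiffOn_zero.2 (hf'.congr fun x hx => (hf x hx).deriv)⟩

/-- The specific volume as a function of `Z = (s - r) / 2`: the inverse of the sound potential,
meaningful on its range `soundPotential p '' Ioi 0`. -/
noncomputable def specificVolume (p : ℝ → ℝ) : ℝ → ℝ :=
  Function.invFunOn (soundPotential p) (Ioi 0)

lemma specificVolume_pos {p : ℝ → ℝ} {Z : ℝ} (hZ : Z ∈ soundPotential p '' Ioi 0) :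
    0 < specificVolume p Z := Function.invFunOn_mem hZ

lemma soundPotential_specificVolume {p : ℝ → ℝ} {Z : ℝ} (hZ : Z ∈ soundPotential p '' Ioi 0) :
    soundPotential p (specificVolume p Z) = Z := Function.invFunOn_eq hZ

namespace IsConvexPressure

variable {p : ℝ → ℝ} (hP : IsConvexPressure p) {v Z M₁ M₂ : ℝ} {τ₀ u₀ : ℝ → ℝ}
include hP

lemma contDiffOn_soundPotential : ContDiffOn ℝ 1 (soundPotential p) (Ioi 0) :=
  contDiffOn_one_of_hasDerivAt isOpen_Ioi (fun _ hv => hP.hasDerivAt_soundPotential hv)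
    hP.continuousOn_soundSpeed.neg

lemma specificVolume_soundPotential (hv : 0 < v) :
    specificVolume p (soundPotential p v) = v :=
  hP.strictAntiOn_soundPotential.injOn.leftInvOn_invFunOn hv

lemma isUpperSet_image_soundPotential (hint : ¬ IntegrableOn (soundSpeed p) (Ioo 0 1)) :
    IsUpperSet (soundPotential p '' Ioi 0) := by
  rintro _ Z hle ⟨v, hv, rfl⟩
  obtain ⟨w, hw, hZ⟩ := hP.exists_lt_soundPotential hint Z
  exact (isPreconnected_Ioi.image _ hP.continuousOn_soundPotential).ordConnected.out
    (mem_image_of_mem _ hv) (mem_image_of_mem _ hw) ⟨hle, hZ.le⟩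

lemma isOpen_image_soundPotential (hint : ¬ IntegrableOn (soundSpeed p) (Ioo 0 1)) :
    IsOpen (soundPotential p '' Ioi 0) := by
  rw [isOpen_iff_mem_nhds]
  rintro _ ⟨v, hv, rfl⟩
  have hv' : v + 1 ∈ Ioi (0 : ℝ) := mem_Ioi.2 (add_pos hv one_pos)
  filter_upwards [Ioi_mem_nhds (hP.strictAntiOn_soundPotential hv hv' (lt_add_one v))] with Z hZ
  exact hP.isUpperSet_image_soundPotential hint (le_of_lt hZ) (mem_image_of_mem _ hv')

lemma hasDerivAt_specificVolume (hZ : Z ∈ soundPotential p '' Ioi 0) :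
    HasDerivAt (specificVolume p) (-(1 / soundSpeed p (specificVolume p Z))) Z := by
  have hv := specificVolume_pos hZ
  have hstrict : HasStrictDerivAt (soundPotential p) (-soundSpeed p (specificVolume p Z))
      (specificVolume p Z) :=
    hasStrictDerivAt_of_hasDerivAt_of_continuousAt
      (eventually_of_mem (Ioi_mem_nhds hv) fun _ hw => hP.hasDerivAt_soundPotential hw)
      (hP.continuousOn_soundSpeed.neg.continuousAt (Ioi_mem_nhds hv))
  have hinv := hstrict.to_local_left_inverse (neg_ne_zero.2 (hP.soundSpeed_pos hv).ne')
    (eventually_of_mem (Ioi_mem_nhds hv) fun _ hw => hP.specificVolume_soundPotential hw)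
  rw [soundPotential_specificVolume hZ] at hinv
  exact hinv.hasDerivAt.congr_deriv (by rw [inv_neg, one_div])

lemma hasDerivAt_soundSpeed_specificVolume (hZ : Z ∈ soundPotential p '' Ioi 0) :
    HasDerivAt (fun Z => soundSpeed p (specificVolume p Z))
      (deriv (soundSpeed p) (specificVolume p Z) * -(1 / soundSpeed p (specificVolume p Z))) Z :=
  (hP.hasDerivAt_soundSpeed' (specificVolume_pos hZ)).comp Z (hP.hasDerivAt_specificVolume hZ)

lemma continuousOn_soundSpeed_specificVolume :
    ContinuousOn (fun Z => soundSpeed p (specificVolume p Z)) (soundPotential p '' Ioi 0) :=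
  fun _ hZ => (hP.hasDerivAt_soundSpeed_specificVolume hZ).continuousAt.continuousWithinAt

lemma continuousOn_one_div_soundSpeed_specificVolume :
    ContinuousOn (fun Z => -(1 / soundSpeed p (specificVolume p Z)))
      (soundPotential p '' Ioi 0) :=
  (continuousOn_const.div hP.continuousOn_soundSpeed_specificVolume
    fun _ hZ => (hP.soundSpeed_pos (specificVolume_pos hZ)).ne').neg

lemma contDiffOn_specificVolume (hint : ¬ IntegrableOn (soundSpeed p) (Ioo 0 1)) :
    ContDiffOn ℝ 1 (specificVolume p) (soundPotential p '' Ioi 0) :=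
  contDiffOn_one_of_hasDerivAt (hP.isOpen_image_soundPotential hint)
    (fun _ hZ => hP.hasDerivAt_specificVolume hZ) hP.continuousOn_one_div_soundSpeed_specificVolume

lemma contDiffOn_soundSpeed : ContDiffOn ℝ 1 (soundSpeed p) (Ioi 0) :=
  contDiffOn_one_of_hasDerivAt isOpen_Ioi (fun _ hv => hP.hasDerivAt_soundSpeed' hv)
    hP.continuousOn_deriv_soundSpeed

lemma isVolumeFunction_specificVolume : IsVolumeFunction (soundPotential p '' Ioi 0)
    (fun Z => soundSpeed p (specificVolume p Z)) (specificVolume p) where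
  hasDerivAt _ hZ := hP.hasDerivAt_specificVolume hZ
  exists_le_of_le N := by
    have hN : max N 1 ∈ Ioi (0 : ℝ) := mem_Ioi.2 (lt_max_of_lt_right one_pos)
    refine ⟨_, mem_image_of_mem _ hN, ?_⟩
    rintro _ ⟨v, hv, rfl⟩ hle
    rw [hP.specificVolume_soundPotential hv] at hle
    exact hP.strictAntiOn_soundPotential.antitoneOn hv hN (hle.trans (le_max_left N 1))

lemma contDiff_soundPotential_comp (hA : AssumptionA M₁ M₂ τ₀ u₀) :
    ContDiff ℝ 1 fun x => soundPotential p (τ₀ x) :=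
  contDiffOn_univ.1 (hP.contDiffOn_soundPotential.comp hA.1.contDiffOn fun x _ => hA.pos x)

lemma isHodographData (hint : ¬ IntegrableOn (soundSpeed p) (Ioo 0 1))
    (hA : AssumptionA M₁ M₂ τ₀ u₀)
    (hs : ∀ x, 0 ≤ deriv (fun x => u₀ x + soundPotential p (τ₀ x)) x)
    (hr : ∀ x, 0 ≤ deriv (fun x => u₀ x - soundPotential p (τ₀ x)) x) :
    IsHodographData (soundPotential p '' Ioi 0) (fun Z => soundSpeed p (specificVolume p Z))
      (fun x => u₀ x + soundPotential p (τ₀ x)) (fun x => u₀ x - soundPotential p (τ₀ x))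
      (M₁ + soundSpeed p M₂ * M₁) where
  isOpen := hP.isOpen_image_soundPotential hint
  isUpperSet := hP.isUpperSet_image_soundPotential hint
  contDiffOn_speed := hP.contDiffOn_soundSpeed.comp (hP.contDiffOn_specificVolume hint)
    fun _ hZ => specificVolume_pos hZ
  speed_pos _ hZ := hP.soundSpeed_pos (specificVolume_pos hZ)
  deriv_speed_nonneg Z hZ := by
    have hv := specificVolume_pos hZ
    rw [(hP.hasDerivAt_soundSpeed_specificVolume hZ).deriv]
    exact mul_nonneg_of_nonpos_of_nonpos (hP.deriv_soundSpeed_neg hv).le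
      (neg_nonpos.2 (one_div_pos.2 (hP.soundSpeed_pos hv)).le)
  contDiff_s := hA.2.1.add (hP.contDiff_soundPotential_comp hA)
  contDiff_r := hA.2.1.sub (hP.contDiff_soundPotential_comp hA)
  deriv_s_nonneg := hs
  deriv_r_nonneg := hr
  bound_pos := add_pos hA.2.2.1 (mul_pos (hP.soundSpeed_pos hA.2.2.2.1) hA.2.2.1)
  deriv_s_le x := by
    have hle := hA.deriv_riemannInv_le hP 1 x
    rw [← (hA.hasDerivAt_riemannInv hP 1 x).deriv] at hle
    simpa using hle
  deriv_r_le x := by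
    have hle := hA.deriv_riemannInv_le hP (-1) x
    rw [← (hA.hasDerivAt_riemannInv hP (-1) x).deriv] at hle
    simpa [sub_eq_add_neg] using hle
  exists_le_diag := ⟨soundPotential p M₁, mem_image_of_mem _ hA.2.2.1, fun x => by
    linarith [hP.strictAntiOn_soundPotential.antitoneOn (hA.pos x) hA.2.2.1
      (hA.specificVolume_le x)]⟩

theorem exists_genPSysSol (hint : ¬ IntegrableOn (soundSpeed p) (Ioo 0 1))
    (hA : AssumptionA M₁ M₂ τ₀ u₀)
    (hs : ∀ x, 0 ≤ deriv (fun x => u₀ x + soundPotential p (τ₀ x)) x)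
    (hr : ∀ x, 0 ≤ deriv (fun x => u₀ x - soundPotential p (τ₀ x)) x) :
    ∃ τ u : ℝ → ℝ → ℝ,
      GenPSysSol p (Ici 0) 1 τ u ∧ (∀ x, τ x 0 = τ₀ x) ∧ ∀ x, u x 0 = u₀ x := by
  have hdiag (x : ℝ) : ((u₀ x + soundPotential p (τ₀ x)) - (u₀ x - soundPotential p (τ₀ x))) / 2 =
      soundPotential p (τ₀ x) := by ring
  have hvol (x : ℝ) : specificVolume p
      (((u₀ x + soundPotential p (τ₀ x)) - (u₀ x - soundPotential p (τ₀ x))) / 2) = τ₀ x := by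
    rw [hdiag, hP.specificVolume_soundPotential (hA.pos x)]
  obtain ⟨Z, u, hZ₀, hu₀, hZR, hZ, hu, hderiv⟩ := (hP.isHodographData hint hA hs hr).exists_solution
    hP.isVolumeFunction_specificVolume (c₀ := soundSpeed p M₂) (N := M₁)
    (fun x => (congrArg (soundSpeed p) (hvol x)).trans_le
      (hP.antitoneOn_soundSpeed hA.2.2.2.1 (hA.pos x) (hA.2.2.2.2.2 x)))
    (fun x => (hvol x).trans_le (hA.specificVolume_le x))
  refine ⟨_, _, genPSysSol_linearExtension (τ := fun w => specificVolume p (Z w))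
    (fun v hv => hP.hasDerivAt hv) (fun w hw => specificVolume_pos (hZR hw))
    ((hP.contDiffOn_specificVolume hint).comp hZ hZR) hu fun w hw => ?_, fun x => ?_, fun x => ?_⟩
  · obtain ⟨a, b, hZ', hu'⟩ := hderiv w hw
    have hv := specificVolume_pos (hZR hw)
    have hc := (hP.soundSpeed_pos hv).ne'
    refine ⟨-(a / soundSpeed p (specificVolume p (Z w))), b,
      ((hP.hasDerivAt_specificVolume (hZR hw)).comp_hasFDerivWithinAt w hZ').congr_fderiv ?_,
      hu'.congr_fderiv ?_⟩
    · ext <;> simp <;> field_simp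
    · rw [← neg_neg (deriv p _), ← hP.sq_soundSpeed hv]
      ext <;> simp
      field_simp
  · rw [linearExtension_of_nonneg _ le_rfl, hZ₀, hvol]
  · rw [linearExtension_of_nonneg _ le_rfl, hu₀]
    ring

end IsConvexPressure

end Sufficiency

theorem psystem_general_pressure_global_iff_rarefaction_general
    {p : ℝ → ℝ} (hP : IsConvexPressure p) (hp''' : DifferentiableOn ℝ (deriv (deriv p)) (Ioi 0))
    (hint : ¬ IntegrableOn (soundSpeed p) (Ioo 0 1))
    (hcond : ∃ A > (0 : ℝ), ∀ v ∈ Ioi (0 : ℝ),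
      0 ≤ (5 + A) * deriv (deriv p) v ^ 2 - 4 * deriv p v * deriv (deriv (deriv p)) v)
    {M₁ M₂ : ℝ} {τ₀ u₀ : ℝ → ℝ} (hA : AssumptionA M₁ M₂ τ₀ u₀) :
    (∃ τ u : ℝ → ℝ → ℝ,
        GenPSysSol p (Ici 0) 1 τ u ∧ (∀ x, τ x 0 = τ₀ x) ∧ ∀ x, u x 0 = u₀ x) ↔
      ∀ x, 0 ≤ deriv (fun x' => u₀ x' + soundPotential p (τ₀ x')) x ∧
        0 ≤ deriv (fun x' => u₀ x' - soundPotential p (τ₀ x')) x := by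
  refine ⟨?_, fun h => hP.exists_genPSysSol hint hA (fun x => (h x).1) fun x => (h x).2⟩
  rintro ⟨τ, u, hsol, hτ, hu⟩ x
  obtain rfl : (fun x => τ x 0) = τ₀ := funext hτ
  obtain rfl : (fun x => u x 0) = u₀ := funext hu
  obtain ⟨A, hA₀, hcond⟩ := hcond
  have hmono (σ : ℤˣ) : Monotone fun x => u x 0 + (σ : ℤ) * soundPotential p (τ x 0) :=
    hsol.monotone_riemannInv hP hA hint
      (fun m hm => hP.exists_div_one_add_le hp''' hA₀ hcond hm) σ
  have hs := (hmono 1).deriv_nonneg (x := x)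
  have hr := (hmono (-1)).deriv_nonneg (x := x)
  exact ⟨by simpa using hs, by simpa [sub_eq_add_neg] using hr⟩

/-- Theorem 2.11: for a general pressure `p ∈ C³((0,∞))` with `p' < 0`, `p'' > 0`,
`p(0⁺) = ∞`, `p(∞) = 0`, `∫_1^∞ √(−p') < ∞`, `∫_0^1 √(−p') = ∞`, and
`(5+A) p''² − 4 p' p''' ≥ 0` for some `A > 0`, and for initial data satisfying
Assumption A, the Cauchy problem for the p-system admits a global-in-time `C¹` solution
if and only if `s_x(x,0) ≥ 0` and `r_x(x,0) ≥ 0` for all `x`. -/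
theorem psystem_general_pressure_global_iff_rarefaction
    (p : ℝ → ℝ) (M₁ M₂ : ℝ)
    (hp : ContDiffOn ℝ 3 p (Set.Ioi 0))
    (hp' : ∀ v ∈ Set.Ioi (0 : ℝ), deriv p v < 0)
    (hp'' : ∀ v ∈ Set.Ioi (0 : ℝ), 0 < deriv (deriv p) v)
    (hp0 : Filter.Tendsto p (nhdsWithin 0 (Set.Ioi 0)) Filter.atTop)
    (hpinf : Filter.Tendsto p Filter.atTop (nhds 0))
    (hint1 : MeasureTheory.IntegrableOn (fun v => Real.sqrt (-deriv p v)) (Set.Ioi 1))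
    (hint0 : ¬ MeasureTheory.IntegrableOn (fun v => Real.sqrt (-deriv p v)) (Set.Ioo 0 1))
    (hcond : ∃ A > (0 : ℝ), ∀ v ∈ Set.Ioi (0 : ℝ),
      0 ≤ (5 + A) * deriv (deriv p) v ^ 2 - 4 * deriv p v * deriv (deriv (deriv p)) v)
    (τ₀ u₀ : ℝ → ℝ) (hA : AssumptionA M₁ M₂ τ₀ u₀) :
    (∃ τ u : ℝ → ℝ → ℝ,
        GenPSysSol p (Set.Ici 0) 1 τ u ∧ (∀ x, τ x 0 = τ₀ x) ∧ (∀ x, u x 0 = u₀ x)) ↔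
    (∀ x, 0 ≤ deriv (fun x' => u₀ x' + ∫ ξ in (τ₀ x')..1, Real.sqrt (-deriv p ξ)) x
        ∧ 0 ≤ deriv (fun x' => u₀ x' - ∫ ξ in (τ₀ x')..1, Real.sqrt (-deriv p ξ)) x) := by
  have hdp := (contDiffOn_succ_iff_deriv_of_isOpen (n := 2) isOpen_Ioi).1 hp
  have hddp := (contDiffOn_succ_iff_deriv_of_isOpen (n := 1) isOpen_Ioi).1 hdp.2.2
  exact psystem_general_pressure_global_iff_rarefaction_general
    ⟨hp.of_le (by norm_num), hp', hp''⟩ (hddp.2.2.differentiableOn one_ne_zero) hint0 hcond hA
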